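/- There exist functions f, g : ℕ → ℕ such that for every finite solvable group G of c-dimension at most k: the quotient G/F_2(G) contains an abelian subgroup of index at most f(k), and the order of G/F_3(G) is at most g(k). -/

import Mathlib

/-!
Write `F = F(G)`, `H = G / F` and `K = G / F_2(G) = H / F(H)`. The c-dimension enters only through
a bound on ranks: every elementary abelian `p`-subgroup `E` of `H` has order at most `p ^ (2 * k)`.

*Bounding the rank.* Let `Q` be a `p`-group normalizing a nilpotent `p'`-subgroup `R` and inducing
an elementary abelian group on it. Choose `Y < Q` maximal among the subgroups containing `C_Q(R)`
with `C_R(Y) ≠ C_R(Q)`. Every element of `Q` outside `Y` has on `C_R(Y)` only the fixed points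
`C_R(Q)`, and a rank-two group with that property acts trivially on a nilpotent `p'`-group. Hence
`|Q : Y| ≤ p`, while `C_G(Q) < C_G(Y)`, so iterating gives a chain of centralizers at least as long
as the rank. To apply this to `E`, take a minimal supplement `M` of `F` in `G`, so that `F ∩ M`
consists of non-generators of `M` and the preimage of `F(H)` in `M` is nilpotent. Lift `E` to a
`p`-subgroup `Q` of `M`, and let it act on the `p'`-parts of `F(M)` and of `F(G)`; the elements of
`Q` centralizing both lie in `F`, so each of the two actions contributes at most `p ^ k`.

*Sections of `p`-groups.* If the elementary abelian subgroups of a `p`-group `M` have rank at most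
`e`, a subgroup containing all `p`-th powers has index at most `p ^ (3 * e ^ 2 + e)`. With `A` a
self-centralizing normal abelian subgroup, the group `M / A` embeds in the units of `End A`, where
on the congruence subgroup modulo `p ^ 2` the `p`-th power map has fibres bounded by the `p`-torsion
of `End A`. So bounds on elementary abelian subgroups pass to sections, in particular to chief
factors of `H`.

*Powers generate a nearly abelian subgroup.* For a solvable linear group of degree at most `r` there
is `m = m(r)` such that commutators of the subgroup generated by `m`-th powers are unipotent. It is
enough that the `n`-th powers preserve a proper nonzero subspace, for some `n = n(r)`. The `r!`-th
powers fix the weights of every normal abelian subgroup; if all of those act by scalars, a term `N`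
of the derived series with `⁅N, N⁆` scalar spans weight vectors of `N` in `End V`, and suitable
powers commute with a nonscalar element of `N`. Applied to the chief factors of `H`, this makes
`⁅H ^ m, H ^ m⁆` centralize each of them, so this subgroup is nilpotent and lies in `F(H)`.
Therefore the subgroup `B` of `K` generated by `m`-th powers is abelian and normal.

*The index.* The quotient `K / B` has exponent dividing `m`, so only primes up to `m` divide its
order, and each Sylow subgroup is bounded through a self-centralizing normal abelian subgroup. This
bounds the index of `B`; and `B ≤ F(K)`, so the same number bounds `|G / F_3(G)|`.
-/

/-- The supremum of a set of normal subgroups is normal. -/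
theorem normal_sSup' {G : Type*} [Group G] {S : Set (Subgroup G)}
    (h : ∀ H ∈ S, H.Normal) : (sSup S).Normal := by
  constructor
  intro n hn g
  have key : sSup S ≤ (sSup S).comap (MulEquiv.toMonoidHom (MulAut.conj g)) := by
    apply sSup_le
    intro H hH x hx
    have : g * x * g⁻¹ ∈ H := (h H hH).conj_mem x hx g
    simp only [Subgroup.mem_comap, MulEquiv.coe_toMonoidHom, MulAut.conj_apply]
    exact le_sSup hH this
  have := key hn
  simpa only [Subgroup.mem_comap, MulEquiv.coe_toMonoidHom, MulAut.conj_apply] using this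

/-- The Fitting subgroup `F(G)`: the join of all nilpotent normal subgroups of `G`. -/
def fittingSubgroup (G : Type*) [Group G] : Subgroup G :=
  sSup {H : Subgroup G | H.Normal ∧ Group.IsNilpotent H}

instance fittingSubgroup_normal (G : Type*) [Group G] : (fittingSubgroup G).Normal :=
  normal_sSup' fun _ hH => hH.1

/-- The second Fitting subgroup `F_2(G)`: the full preimage in `G` of `F(G/F(G))`. -/
def fitting2 (G : Type*) [Group G] : Subgroup G :=
  (fittingSubgroup (G ⧸ fittingSubgroup G)).comap (QuotientGroup.mk' (fittingSubgroup G))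

instance fitting2_normal (G : Type*) [Group G] : (fitting2 G).Normal :=
  (fittingSubgroup_normal _).comap _

/-- The third Fitting subgroup `F_3(G)`: the full preimage in `G` of `F(G/F_2(G))`. -/
def fitting3 (G : Type*) [Group G] : Subgroup G :=
  (fittingSubgroup (G ⧸ fitting2 G)).comap (QuotientGroup.mk' (fitting2 G))

instance fitting3_normal (G : Type*) [Group G] : (fitting3 G).Normal :=
  (fittingSubgroup_normal _).comap _

open scoped commutatorElement

/-! ### Coprime automorphisms -/

section FixedPoints

variable {R : Type*} [Group R]

/-- The subgroup of fixed points of an automorphism, written `C_R(c)` on paper. -/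
def fixedSubgroup (c : MulAut R) : Subgroup R :=
  MonoidHom.eqLocus c.toMonoidHom (MonoidHom.id R)

theorem mem_fixedSubgroup {c : MulAut R} {x : R} : x ∈ fixedSubgroup c ↔ c x = x :=
  Iff.rfl

theorem fixedSubgroup_eq_top {c : MulAut R} : fixedSubgroup c = ⊤ ↔ c = 1 := by
  simp only [Subgroup.eq_top_iff', mem_fixedSubgroup, MulEquiv.ext_iff, MulAut.one_apply]

theorem mem_fixedSubgroup_of_inv_mul_mem {p : ℕ} (hp : (Nat.card R).Coprime p)
    {c : MulAut R} (hc : c ^ p = 1) {x : R} (hx : x⁻¹ * c x ∈ fixedSubgroup c) :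
    x ∈ fixedSubgroup c := by
  have hiter : ∀ j : ℕ, (c ^ j) x = x * (x⁻¹ * c x) ^ j := by
    intro j
    induction j with
    | zero => simp
    | succ j ih =>
      rw [pow_succ', MulAut.mul_apply, ih, map_mul, map_pow, mem_fixedSubgroup.mp hx, pow_succ',
        ← mul_assoc, mul_inv_cancel_left]
  have hpow : (x⁻¹ * c x) ^ p = 1 := by simpa [hc] using hiter p
  have hone : x⁻¹ * c x = 1 :=
    (powCoprime hp).injective (hpow.trans (one_pow p).symm)
  exact (inv_mul_eq_one.mp hone).symm

/-- `a` and `b` generate an elementary abelian `p`-group of rank at most two in which `b` and the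
`a * b ^ i`, the generators of the `p + 1` lines, have no fixed points but the common ones. -/
structure HasUniformFixedPoints (p : ℕ) (a b : MulAut R) : Prop where
  commute : Commute a b
  pow_left : a ^ p = 1
  pow_right : b ^ p = 1
  line_le : ∀ i : ℕ, fixedSubgroup (a * b ^ i) ≤ fixedSubgroup a ⊓ fixedSubgroup b
  right_le : fixedSubgroup b ≤ fixedSubgroup a

theorem HasUniformFixedPoints.line_pow {p : ℕ} {a b : MulAut R}
    (h : HasUniformFixedPoints p a b) (i : ℕ) : (a * b ^ i) ^ p = 1 := by
  rw [(h.commute.pow_right i).mul_pow, h.pow_left, pow_right_comm, h.pow_right, one_pow, one_mul]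

theorem HasUniformFixedPoints.of_injective {S : Type*} [Group S] {p : ℕ} {a b : MulAut R}
    (h : HasUniformFixedPoints p a b) (φ : MulAut R →* MulAut S) {f : S →* R}
    (hf : Function.Injective f) (hφ : ∀ e s, f (φ e s) = e (f s)) :
    HasUniformFixedPoints p (φ a) (φ b) := by
  have hfix : ∀ e, fixedSubgroup (φ e) = (fixedSubgroup e).comap f := fun e ↦ by
    ext s
    rw [Subgroup.mem_comap, mem_fixedSubgroup, mem_fixedSubgroup, ← hφ, hf.eq_iff]
  refine ⟨h.commute.map φ, ?_, ?_, fun i ↦ ?_, ?_⟩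
  · rw [← map_pow, h.pow_left, map_one]
  · rw [← map_pow, h.pow_right, map_one]
  · rw [← map_pow, ← map_mul, hfix, hfix, hfix]
    exact Subgroup.comap_mono (h.line_le i)
  · rw [hfix, hfix]
    exact Subgroup.comap_mono h.right_le

end FixedPoints

section AutNorm

variable {V : Type*} [CommGroup V] {p : ℕ}

/-- The norm `∏ j < p, c ^ j v` of an element under an automorphism with `c ^ p = 1`. It is indexed
by `ZMod p` so that the translations and homotheties of `ZMod p` reindex it. -/
def autNorm (p : ℕ) [NeZero p] (c : MulAut V) (v : V) : V :=
  ∏ j : ZMod p, (c ^ j.val) v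

theorem autNorm_mem_fixedSubgroup [NeZero p] {c : MulAut V} (hc : c ^ p = 1) (v : V) :
    autNorm p c v ∈ fixedSubgroup c := by
  have hshift : ∀ j : ZMod p, c ((c ^ j.val) v) = (c ^ (j + 1).val) v := fun j ↦ by
    rw [ZMod.val_add, ← pow_eq_pow_mod _ hc, pow_add, ZMod.val_one_eq_one_mod,
      ← pow_eq_pow_mod _ hc, pow_one, ← pow_succ, pow_succ', MulAut.mul_apply]
  rw [mem_fixedSubgroup, autNorm, map_prod]
  exact Fintype.prod_equiv (Equiv.addRight (1 : ZMod p)) _ _ hshift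

/-- Every nontrivial element of `⟨a, b⟩` lies on exactly one line and the identity on all `p + 1`,
so the product of the norms of the lines is the norm of `⟨a, b⟩` times a `p`-th power. -/
theorem prod_autNorm_mul_autNorm [Fact p.Prime] {a b : MulAut V} (hab : Commute a b)
    (hb : b ^ p = 1) (v : V) :
    (∏ i : ZMod p, autNorm p (a * b ^ i.val) v) * autNorm p b v =
      v ^ p * autNorm p a (autNorm p b v) := by
  have hterm : ∀ i j : ZMod p,
      ((a * b ^ i.val) ^ j.val) v = (a ^ j.val) ((b ^ (i * j).val) v) := fun i j ↦ by
    rw [(hab.pow_right _).mul_pow, ← pow_mul, ZMod.val_mul, ← pow_eq_pow_mod _ hb,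
      MulAut.mul_apply]
  have hzero : ∏ i : ZMod p, (a ^ (0 : ZMod p).val) ((b ^ (i * 0).val) v) = v ^ p := by
    simp [ZMod.card]
  have hline : ∀ j ∈ Finset.univ.erase (0 : ZMod p),
      ∏ i, (a ^ j.val) ((b ^ (i * j).val) v) = (a ^ j.val) (autNorm p b v) := fun j hj ↦ by
    rw [autNorm, map_prod]
    exact Fintype.prod_equiv (Equiv.mulRight₀ j (Finset.ne_of_mem_erase hj)) _ _ fun _ ↦ rfl
  calc (∏ i : ZMod p, autNorm p (a * b ^ i.val) v) * autNorm p b v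
      = (∏ j : ZMod p, ∏ i : ZMod p, (a ^ j.val) ((b ^ (i * j).val) v)) * autNorm p b v := by
        simp only [autNorm, hterm]
        rw [Finset.prod_comm]
    _ = v ^ p * (autNorm p b v *
          ∏ j ∈ Finset.univ.erase (0 : ZMod p), (a ^ j.val) (autNorm p b v)) := by
        rw [← Finset.mul_prod_erase _ _ (Finset.mem_univ (0 : ZMod p)), hzero,
          Finset.prod_congr rfl hline, mul_assoc, mul_comm (∏ j ∈ _, _)]
    _ = v ^ p * autNorm p a (autNorm p b v) := by
        rw [autNorm.eq_1 p a, ← Finset.mul_prod_erase _ _ (Finset.mem_univ (0 : ZMod p))]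
        simp

theorem HasUniformFixedPoints.pow_mem_fixedSubgroup [Fact p.Prime] {a b : MulAut V}
    (h : HasUniformFixedPoints p a b) (v : V) : v ^ p ∈ fixedSubgroup b := by
  have hlines : ∏ i : ZMod p, autNorm p (a * b ^ i.val) v ∈ fixedSubgroup b :=
    prod_mem fun i _ ↦ (h.line_le _ (autNorm_mem_fixedSubgroup (h.line_pow _) v)).2
  have hplane : autNorm p a (autNorm p b v) ∈ fixedSubgroup b := by
    have hmem := autNorm_mem_fixedSubgroup h.pow_left (autNorm p b v)
    exact (h.line_le 0 (by rwa [pow_zero, mul_one])).2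
  rw [← mul_inv_eq_iff_eq_mul.mpr (prod_autNorm_mul_autNorm h.commute h.pow_right v)]
  exact mul_mem (mul_mem hlines (autNorm_mem_fixedSubgroup h.pow_right v)) (inv_mem hplane)

theorem HasUniformFixedPoints.eq_one_of_commGroup [Fact p.Prime] {a b : MulAut V}
    (h : HasUniformFixedPoints p a b) (hp : (Nat.card V).Coprime p) : b = 1 := by
  rw [← fixedSubgroup_eq_top, Subgroup.eq_top_iff']
  intro v
  obtain ⟨w, rfl⟩ := (powCoprime hp).surjective v
  exact h.pow_mem_fixedSubgroup w

end AutNorm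

section Nilpotent

variable {R : Type*} [Group R]

/-- The action of the automorphisms of a group on its central quotient. -/
def quotientCenterAut (R : Type*) [Group R] : MulAut R →* MulAut (R ⧸ Subgroup.center R) where
  toFun e := QuotientGroup.congr _ _ e
    (Subgroup.characteristic_iff_map_eq.mp inferInstance e)
  map_one' := MulEquiv.ext fun x ↦ QuotientGroup.induction_on x fun _ ↦ rfl
  map_mul' _ _ := MulEquiv.ext fun x ↦ QuotientGroup.induction_on x fun _ ↦ rfl

theorem mk_mem_fixedSubgroup_quotientCenterAut {c : MulAut R} {x : R} :
    (x : R ⧸ Subgroup.center R) ∈ fixedSubgroup (quotientCenterAut R c) ↔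
      x⁻¹ * c x ∈ Subgroup.center R :=
  eq_comm.trans QuotientGroup.eq

theorem mk_mem_fixedSubgroup_iff {p : ℕ} (hp : (Nat.card R).Coprime p) {c : MulAut R}
    (hc : c ^ p = 1) (hcen : Subgroup.center R ≤ fixedSubgroup c) {x : R} :
    (x : R ⧸ Subgroup.center R) ∈ fixedSubgroup (quotientCenterAut R c) ↔
      x ∈ fixedSubgroup c := by
  rw [mk_mem_fixedSubgroup_quotientCenterAut]
  refine ⟨fun hx ↦ mem_fixedSubgroup_of_inv_mul_mem hp hc (hcen hx), fun hx ↦ ?_⟩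
  rw [mem_fixedSubgroup.mp hx, inv_mul_cancel]
  exact one_mem _

open scoped IsMulCommutative in
theorem HasUniformFixedPoints.center_le {p : ℕ} [Fact p.Prime] {a b : MulAut R}
    (h : HasUniformFixedPoints p a b) (hp : (Nat.card R).Coprime p) :
    Subgroup.center R ≤ fixedSubgroup b := by
  have hcen := (h.of_injective (MulAut.characteristic (Subgroup.center R))
    (Subgroup.subtype_injective _) fun _ _ ↦ rfl).eq_one_of_commGroup
    (hp.coprime_dvd_left (Subgroup.card_subgroup_dvd_card _))
  intro z hz
  exact congrArg Subtype.val (DFunLike.congr_fun hcen ⟨z, hz⟩)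

theorem HasUniformFixedPoints.quotientCenter {p : ℕ} [Fact p.Prime] {a b : MulAut R}
    (h : HasUniformFixedPoints p a b) (hp : (Nat.card R).Coprime p) :
    HasUniformFixedPoints p (quotientCenterAut R a) (quotientCenterAut R b) := by
  have hb := h.center_le hp
  have ha := hb.trans h.right_le
  have hline : ∀ i : ℕ, Subgroup.center R ≤ fixedSubgroup (a * b ^ i) := fun i z hz ↦ by
    have hbi : (b ^ i) z = z := by
      induction i with
      | zero => rfl
      | succ i ih => rw [pow_succ, MulAut.mul_apply, mem_fixedSubgroup.mp (hb hz), ih]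
    rw [mem_fixedSubgroup, MulAut.mul_apply, hbi, mem_fixedSubgroup.mp (ha hz)]
  refine ⟨h.commute.map _, ?_, ?_, fun i x ↦ ?_, fun x ↦ ?_⟩
  · rw [← map_pow, h.pow_left, map_one]
  · rw [← map_pow, h.pow_right, map_one]
  · induction x using QuotientGroup.induction_on with | _ x => ?_
    rw [← map_pow, ← map_mul, Subgroup.mem_inf,
      mk_mem_fixedSubgroup_iff hp (h.line_pow i) (hline i),
      mk_mem_fixedSubgroup_iff hp h.pow_left ha, mk_mem_fixedSubgroup_iff hp h.pow_right hb]
    exact fun hx ↦ h.line_le i hx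
  · induction x using QuotientGroup.induction_on with | _ x => ?_
    rw [mk_mem_fixedSubgroup_iff hp h.pow_left ha, mk_mem_fixedSubgroup_iff hp h.pow_right hb]
    exact fun hx ↦ h.right_le hx

theorem HasUniformFixedPoints.eq_one [Group.IsNilpotent R] {p : ℕ} [Fact p.Prime]
    {a b : MulAut R} (h : HasUniformFixedPoints p a b) (hp : (Nat.card R).Coprime p) : b = 1 := by
  revert a b hp
  refine Group.nilpotent_center_quotient_ind (P := fun R _ _ ↦ ∀ {a b : MulAut R},
    HasUniformFixedPoints p a b → (Nat.card R).Coprime p → b = 1) R ?_ ?_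
  · intro R _ _ a b _ _
    exact MulEquiv.ext fun _ ↦ Subsingleton.elim _ _
  · intro R _ _ ih a b h hp
    have hquot := ih (h.quotientCenter hp)
      (hp.coprime_dvd_left (Subgroup.card_quotient_dvd_card _))
    rw [← fixedSubgroup_eq_top, Subgroup.eq_top_iff']
    intro x
    rw [← mk_mem_fixedSubgroup_iff hp h.pow_right (h.center_le hp),
      fixedSubgroup_eq_top.mpr hquot]
    exact Subgroup.mem_top _

end Nilpotent

/-! ### Chains of centralizers from coprime action -/

/-- `G` has c-dimension at most `k`: no chain of centralizers of subsets of `G` has length more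
than `k`. -/
def CDimLE (k : ℕ) (G : Type*) [Group G] : Prop :=
  ∀ (m : ℕ) (S : Fin (m + 1) → Set G),
    StrictMono (fun i ↦ Subgroup.centralizer (S i)) → m ≤ k

theorem index_le_of_zpowers_sup_eq_top {Q : Type*} [Group Q] {Y : Subgroup Q} [Y.Normal] {n : ℕ}
    (hn : 0 < n) {b : Q} (hb : b ^ n ∈ Y) (h : Subgroup.zpowers b ⊔ Y = ⊤) : Y.index ≤ n := by
  have hcyclic : Subgroup.zpowers (b : Q ⧸ Y) = ⊤ := by
    have hmap := congrArg (Subgroup.map (QuotientGroup.mk' Y)) h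
    rwa [Subgroup.map_sup, QuotientGroup.map_mk'_self, sup_bot_eq, MonoidHom.map_zpowers,
      Subgroup.map_top_of_surjective _ (QuotientGroup.mk'_surjective Y)] at hmap
  rw [Subgroup.index_eq_card, ← Subgroup.card_top, ← hcyclic, Nat.card_zpowers]
  refine orderOf_le_of_pow_eq_one hn ?_
  rwa [← QuotientGroup.mk_pow, QuotientGroup.eq_one_iff]

theorem index_le_of_fixedSubgroup_le {Q R : Type*} [Group Q] [Group R] [Group.IsNilpotent R]
    {p : ℕ} [Fact p.Prime] (hR : (Nat.card R).Coprime p)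
    {φ : Q →* MulAut R} (hφ : φ ≠ 1) (hcomm : ∀ x y, Commute (φ x) (φ y))
    (hpow : ∀ x, φ x ^ p = 1) {Y : Subgroup Q} [Y.Normal] (hY : ∀ x : Q, x ^ p ∈ Y)
    (hfix : ∀ c ∉ Y, ∀ q, fixedSubgroup (φ c) ≤ fixedSubgroup (φ q)) : Y.index ≤ p := by
  by_cases hYtop : Y = ⊤
  · rw [hYtop, Subgroup.index_top]
    exact (Fact.out : p.Prime).one_le
  obtain ⟨b, -, hb⟩ := SetLike.exists_of_lt (lt_top_iff_ne_top.mpr hYtop)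
  refine index_le_of_zpowers_sup_eq_top (Fact.out : p.Prime).pos (hY b) ?_
  by_contra hntop
  obtain ⟨a, -, ha⟩ := SetLike.exists_of_lt (lt_top_iff_ne_top.mpr hntop)
  have hline : ∀ i : ℕ, a * b ^ i ∉ Y := fun i hmem ↦ ha (by
    rw [← mul_inv_cancel_right a (b ^ i)]
    exact mul_mem (Subgroup.mem_sup_right hmem)
      (Subgroup.mem_sup_left (inv_mem (Subgroup.npow_mem_zpowers b i))))
  have huniform : HasUniformFixedPoints p (φ a) (φ b) :=
    ⟨hcomm a b, hpow a, hpow b,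
      fun i ↦ by
        rw [← map_pow, ← map_mul]
        exact le_inf (hfix _ (hline i) a) (hfix _ (hline i) b),
      hfix b hb a⟩
  refine hφ (MonoidHom.ext fun q ↦ ?_)
  rw [MonoidHom.one_apply, ← fixedSubgroup_eq_top, ← top_le_iff,
    ← fixedSubgroup_eq_top.mpr (huniform.eq_one hR)]
  exact hfix b hb q

section CoprimeAction

variable {G : Type*} [Group G]

/-- The action by conjugation of a subgroup `Q` on a subgroup `R` that it normalizes. -/
def conjAut {Q R : Subgroup G} (h : Q ≤ Subgroup.normalizer (R : Set G)) : Q →* MulAut R :=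
  R.normalizerMonoidHom.comp (Subgroup.inclusion h)

theorem conjAut_eq_one {Q R : Subgroup G} (h : Q ≤ Subgroup.normalizer (R : Set G)) {q : Q} :
    conjAut h q = 1 ↔ (q : G) ∈ Subgroup.centralizer (R : Set G) := by
  rw [conjAut, MonoidHom.comp_apply, ← MonoidHom.mem_ker, Subgroup.normalizerMonoidHom_ker,
    Subgroup.mem_subgroupOf, Subgroup.coe_inclusion]

theorem mem_fixedSubgroup_conjAut {Q R : Subgroup G} (h : Q ≤ Subgroup.normalizer (R : Set G))
    {q : Q} {s : R} : s ∈ fixedSubgroup (conjAut h q) ↔ Commute (q : G) s :=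
  Subtype.ext_iff.trans mul_inv_eq_iff_eq_mul

/-- `Q` normalizes `R` and the group of automorphisms it induces on `R` is elementary abelian of
exponent `p`. -/
structure InducesElementaryAbelian (p : ℕ) (Q R : Subgroup G) : Prop where
  le_normalizer : Q ≤ Subgroup.normalizer (R : Set G)
  commutator_mem : ∀ x ∈ Q, ∀ y ∈ Q, ⁅x, y⁆ ∈ Subgroup.centralizer (R : Set G)
  pow_mem : ∀ x ∈ Q, x ^ p ∈ Subgroup.centralizer (R : Set G)

theorem InducesElementaryAbelian.mono {p : ℕ} {Q Y R : Subgroup G}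
    (h : InducesElementaryAbelian p Q R) (hYQ : Y ≤ Q) : InducesElementaryAbelian p Y R :=
  ⟨hYQ.trans h.le_normalizer, fun x hx y hy ↦ h.commutator_mem x (hYQ hx) y (hYQ hy),
    fun x hx ↦ h.pow_mem x (hYQ hx)⟩

theorem InducesElementaryAbelian.le_normalizer_of_le {p : ℕ} {Q Y R : Subgroup G}
    (h : InducesElementaryAbelian p Q R) (hYQ : Y ≤ Q)
    (hY : Subgroup.centralizer (R : Set G) ⊓ Q ≤ Y) :
    Q ≤ Subgroup.normalizer (Y : Set G) := by
  rw [← Subgroup.normal_subgroupOf_iff_le_normalizer hYQ]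
  refine ⟨fun y hy q ↦ ?_⟩
  rw [Subgroup.mem_subgroupOf] at hy ⊢
  have hcomm : ⁅(q : G), (y : G)⁆ ∈ Y := hY ⟨h.commutator_mem q q.2 y y.2, (⁅q, y⁆ : Q).2⟩
  simpa [commutatorElement_def] using mul_mem hcomm hy

theorem normalizer_le_normalizer_centralizer (Y : Subgroup G) :
    Subgroup.normalizer (Y : Set G) ≤
      Subgroup.normalizer (Subgroup.centralizer (Y : Set G) : Set G) := by
  rw [← Subgroup.normal_subgroupOf_iff_le_normalizer (Subgroup.centralizer_le_normalizer _),
    ← Subgroup.normalizerMonoidHom_ker]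
  infer_instance

/-- Take `Y` maximal among the subgroups between `C_Q(R)` and `Q` with more fixed points in `R`
than `Q`. -/
theorem exists_lt_forall_commute_mem_centralizer [Finite G] {Q R : Subgroup G}
    (hQ : ¬ Q ≤ Subgroup.centralizer (R : Set G)) :
    ∃ Y < Q, Subgroup.centralizer (R : Set G) ⊓ Q ≤ Y ∧
      ¬ R ⊓ Subgroup.centralizer (Y : Set G) ≤ Subgroup.centralizer (Q : Set G) ∧
      ∀ c ∈ Q, c ∉ Y → ∀ s ∈ R ⊓ Subgroup.centralizer (Y : Set G), Commute c s →
        s ∈ Subgroup.centralizer (Q : Set G) := by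
  have hbase : ¬ R ⊓ Subgroup.centralizer (Subgroup.centralizer (R : Set G) ⊓ Q : Subgroup G) ≤
      Subgroup.centralizer (Q : Set G) := fun h ↦
    hQ (Subgroup.le_centralizer_iff.mp
      ((le_inf le_rfl (Subgroup.le_centralizer_iff.mp inf_le_left)).trans h))
  obtain ⟨Y, ⟨hCY, hYQ, hY⟩, hmax⟩ :=
    (Set.toFinite {Y : Subgroup G | Subgroup.centralizer (R : Set G) ⊓ Q ≤ Y ∧ Y ≤ Q ∧
      ¬ R ⊓ Subgroup.centralizer (Y : Set G) ≤ Subgroup.centralizer (Q : Set G)}).exists_maximal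
      ⟨_, le_rfl, inf_le_right, hbase⟩
  refine ⟨Y, hYQ.lt_of_ne ?_, hCY, hY, fun c hcQ hcY s hs hcs ↦ ?_⟩
  · rintro rfl
    exact hY inf_le_right
  by_contra hsQ
  have hYc : Y ⊔ Subgroup.zpowers c ≤ Subgroup.centralizer {s} :=
    sup_le (fun y hy ↦ Subgroup.mem_centralizer_singleton_iff.mpr (hs.2 y hy))
      (Subgroup.zpowers_le.mpr (Subgroup.mem_centralizer_singleton_iff.mpr hcs))
  refine hcY (hmax ⟨hCY.trans le_sup_left, sup_le hYQ (by simpa using hcQ), fun h ↦ ?_⟩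
    le_sup_left (Subgroup.mem_sup_right (Subgroup.mem_zpowers c)))
  exact hsQ (h ⟨hs.1, fun y hy ↦ Subgroup.mem_centralizer_singleton_iff.mp (hYc hy)⟩)

theorem InducesElementaryAbelian.relIndex_le {p : ℕ} [Fact p.Prime] {Q Y R : Subgroup G}
    [Group.IsNilpotent R] (hR : (Nat.card R).Coprime p)
    (h : InducesElementaryAbelian p Q R) (hYQ : Y ≤ Q)
    (hCY : Subgroup.centralizer (R : Set G) ⊓ Q ≤ Y)
    (hY : ¬ R ⊓ Subgroup.centralizer (Y : Set G) ≤ Subgroup.centralizer (Q : Set G))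
    (hfix : ∀ c ∈ Q, c ∉ Y → ∀ s ∈ R ⊓ Subgroup.centralizer (Y : Set G), Commute c s →
      s ∈ Subgroup.centralizer (Q : Set G)) : Y.relIndex Q ≤ p := by
  have hQY := h.le_normalizer_of_le hYQ hCY
  have hnormal : (Y.subgroupOf Q).Normal :=
    (Subgroup.normal_subgroupOf_iff_le_normalizer hYQ).mpr hQY
  have hQR : Q ≤ Subgroup.normalizer (R ⊓ Subgroup.centralizer (Y : Set G) : Subgroup G) :=
    (le_inf h.le_normalizer (hQY.trans (normalizer_le_normalizer_centralizer Y))).trans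
      Subgroup.inf_normalizer_le_normalizer_inf
  have hker : ∀ q : Q, (q : G) ∈ Subgroup.centralizer (R : Set G) → conjAut hQR q = 1 :=
    fun q hq ↦ (conjAut_eq_one hQR).mpr (Subgroup.centralizer_le inf_le_left hq)
  have hnil : Group.IsNilpotent (R ⊓ Subgroup.centralizer (Y : Set G) : Subgroup G) :=
    Group.nilpotent_of_mulEquiv (Subgroup.subgroupOfEquivOfLe inf_le_left)
  refine index_le_of_fixedSubgroup_le
    (hR.coprime_dvd_left (Subgroup.card_dvd_of_le inf_le_left)) (φ := conjAut hQR) ?_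
    (fun x y ↦ ?_) (fun x ↦ ?_) (fun x ↦ ?_) (fun c hc q s hs ↦ ?_)
  · refine fun hφ ↦ hY (Subgroup.le_centralizer_iff.mp fun q hq ↦ ?_)
    exact (conjAut_eq_one hQR (q := ⟨q, hq⟩)).mp (by rw [hφ, MonoidHom.one_apply])
  · rw [← commutatorElement_eq_one_iff_commute, ← map_commutatorElement]
    exact hker _ (h.commutator_mem x x.2 y y.2)
  · rw [← map_pow]
    exact hker _ (h.pow_mem x x.2)
  · exact hCY ⟨h.pow_mem x x.2, (x ^ p).2⟩
  · rw [mem_fixedSubgroup_conjAut] at hs ⊢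
    exact hfix c c.2 hc s s.2 hs q q.2

theorem strictMono_centralizer_cons {n : ℕ} {S : Set G} {T : Fin (n + 1) → Set G}
    (hT : StrictMono fun i ↦ Subgroup.centralizer (T i))
    (h : Subgroup.centralizer S < Subgroup.centralizer (T 0)) :
    StrictMono fun i ↦ Subgroup.centralizer ((Fin.cons S T : Fin (n + 2) → Set G) i) := by
  rw [Fin.strictMono_iff_lt_succ]
  refine Fin.cases (by simpa using h) fun j ↦ ?_
  simpa [← Fin.succ_castSucc] using hT (Fin.castSucc_lt_succ (i := j))

theorem InducesElementaryAbelian.exists_strictMono_centralizer [Finite G] {p : ℕ}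
    [Fact p.Prime] {R : Subgroup G} [Group.IsNilpotent R] (hR : (Nat.card R).Coprime p)
    {Q : Subgroup G} (h : InducesElementaryAbelian p Q R) :
    ∃ (n : ℕ) (T : Fin (n + 1) → Set G), (StrictMono fun i ↦ Subgroup.centralizer (T i)) ∧
      T 0 = Q ∧ (Subgroup.centralizer (R : Set G)).relIndex Q ≤ p ^ n := by
  induction Q using WellFoundedLT.induction with | _ Q ih => ?_
  by_cases hQ : Q ≤ Subgroup.centralizer (R : Set G)
  · refine ⟨0, fun _ ↦ Q, Subsingleton.strictMono (α := Fin 1) _, rfl, ?_⟩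
    rw [Subgroup.relIndex_eq_one.mpr hQ, pow_zero]
  obtain ⟨Y, hYQ, hCY, hY, hfix⟩ := exists_lt_forall_commute_mem_centralizer hQ
  obtain ⟨n, T, hT, hT0, hidx⟩ := ih Y hYQ (h.mono hYQ.le)
  have hlt : Subgroup.centralizer (Q : Set G) < Subgroup.centralizer (T 0) := by
    rw [hT0]
    refine (Subgroup.centralizer_le hYQ.le).lt_of_ne fun heq ↦ hY ?_
    rw [heq]
    exact inf_le_right
  refine ⟨n + 1, Fin.cons (Q : Set G) T, strictMono_centralizer_cons hT hlt, rfl, ?_⟩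
  have hinf : (Subgroup.centralizer (R : Set G) ⊓ Q).relIndex Y =
      (Subgroup.centralizer (R : Set G)).relIndex Y := by
    rw [← Subgroup.inf_relIndex_right, inf_assoc, inf_eq_right.mpr hYQ.le,
      Subgroup.inf_relIndex_right]
  calc (Subgroup.centralizer (R : Set G)).relIndex Q
      = (Subgroup.centralizer (R : Set G)).relIndex Y * Y.relIndex Q := by
        rw [← hinf, Subgroup.relIndex_mul_relIndex _ _ _ hCY hYQ.le, Subgroup.inf_relIndex_right]
    _ ≤ p ^ n * p := Nat.mul_le_mul hidx (h.relIndex_le hR hYQ.le hCY hY hfix)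
    _ = p ^ (n + 1) := (pow_succ p n).symm

theorem CDimLE.relIndex_centralizer_le [Finite G] {k : ℕ} (hG : CDimLE k G) {p : ℕ}
    [Fact p.Prime] {R Q : Subgroup G} [Group.IsNilpotent R] (hR : (Nat.card R).Coprime p)
    (h : InducesElementaryAbelian p Q R) :
    (Subgroup.centralizer (R : Set G)).relIndex Q ≤ p ^ k := by
  obtain ⟨n, T, hT, -, hidx⟩ := h.exists_strictMono_centralizer hR
  exact hidx.trans (Nat.pow_le_pow_right (Fact.out : p.Prime).pos (hG n T hT))

end CoprimeAction

/-! ### `p`-cores and the Fitting subgroup -/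

/-- The `p`-core `O_p(G)`: the join of all normal `p`-subgroups of `G`. -/
def pCore (p : ℕ) (G : Type*) [Group G] : Subgroup G :=
  sSup {H : Subgroup G | H.Normal ∧ IsPGroup p H}

/-- The `p'`-core `O_{p'}(G)` of a finite group: the join of all normal subgroups of `G` of order
prime to `p`. -/
def pPrimeCore (p : ℕ) (G : Type*) [Group G] : Subgroup G :=
  sSup {H : Subgroup G | H.Normal ∧ (Nat.card H).Coprime p}

section Cores

variable {p : ℕ} {G : Type*} [Group G]

instance pCore_normal : (pCore p G).Normal :=
  normal_sSup' fun _ hH ↦ hH.1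

instance pPrimeCore_normal : (pPrimeCore p G).Normal :=
  normal_sSup' fun _ hH ↦ hH.1

theorem isPGroup_pCore : IsPGroup p (pCore p G) :=
  Sylow.sSup_of_normal _ (fun _ h ↦ h.2) (fun _ h ↦ h.1)

theorem le_pCore {H : Subgroup G} [H.Normal] (hH : IsPGroup p H) : H ≤ pCore p G :=
  le_sSup ⟨inferInstance, hH⟩

theorem le_pPrimeCore {H : Subgroup G} [H.Normal] (hH : (Nat.card H).Coprime p) :
    H ≤ pPrimeCore p G :=
  le_sSup ⟨inferInstance, hH⟩

theorem coprime_card_sup {H K : Subgroup G} [K.Normal] {n : ℕ} (hH : (Nat.card H).Coprime n)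
    (hK : (Nat.card K).Coprime n) : (Nat.card (H ⊔ K : Subgroup G)).Coprime n := by
  rw [← Subgroup.relIndex_bot_left,
    ← Subgroup.relIndex_mul_relIndex ⊥ K (H ⊔ K) bot_le le_sup_right, Subgroup.relIndex_sup_right,
    Subgroup.relIndex_bot_left]
  exact hK.mul_left (hH.coprime_dvd_left (Subgroup.relIndex_dvd_card K H))

theorem coprime_card_pPrimeCore [Finite G] : (Nat.card (pPrimeCore p G)).Coprime p := by
  obtain ⟨M, ⟨hM, hMp⟩, hmax⟩ := (Set.toFinite {H : Subgroup G | H.Normal ∧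
    (Nat.card H).Coprime p}).exists_maximal ⟨⊥, inferInstance, by simp⟩
  have hle : pPrimeCore p G ≤ M := sSup_le fun H ⟨hH, hHp⟩ ↦
    le_sup_left.trans (hmax ⟨inferInstance, coprime_card_sup hHp hMp⟩ le_sup_right)
  exact hMp.coprime_dvd_left (Subgroup.card_dvd_of_le hle)

theorem eq_bot_of_isPGroup_of_coprime [Fact p.Prime] {H : Subgroup G} (hH : IsPGroup p H)
    (hcop : (Nat.card H).Coprime p) : H = ⊥ := by
  refine Subgroup.card_eq_one.mp (hH.card_eq_or_dvd.resolve_right fun hdvd ↦ ?_)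
  exact (Fact.out : p.Prime).coprime_iff_not_dvd.mp hcop.symm hdvd

theorem le_pCore_of_le_sup [Finite G] [Fact p.Prime] {X : Subgroup G} (hX : IsPGroup p X)
    (hle : X ≤ pCore p G ⊔ pPrimeCore p G) : X ≤ pCore p G := by
  have hmap := Subgroup.map_mono (f := QuotientGroup.mk' (pCore p G)) hle
  rw [Subgroup.map_sup, QuotientGroup.map_mk'_self, bot_sup_eq] at hmap
  rw [← QuotientGroup.ker_mk' (pCore p G), ← Subgroup.map_eq_bot_iff]
  exact eq_bot_of_isPGroup_of_coprime (hX.map _) (coprime_card_pPrimeCore.coprime_dvd_left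
    ((Subgroup.card_dvd_of_le hmap).trans (Subgroup.card_map_dvd (H := pPrimeCore p G) _)))

theorem pCore_le_centralizer_pPrimeCore [Finite G] [Fact p.Prime] :
    pCore p G ≤ Subgroup.centralizer (pPrimeCore p G : Set G) := by
  have hdisj : Disjoint (pCore p G) (pPrimeCore p G) := disjoint_iff.mpr
    (eq_bot_of_isPGroup_of_coprime (isPGroup_pCore.to_le inf_le_left)
      (coprime_card_pPrimeCore.coprime_dvd_left (Subgroup.card_dvd_of_le inf_le_right)))
  exact fun x hx y hy ↦ (Subgroup.commute_of_normal_of_disjoint _ _ inferInstance inferInstance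
    hdisj x y hx hy).symm

theorem sylow_map_subtype_normal [Finite G] {L : Subgroup G} [L.Normal] [Group.IsNilpotent L]
    [Fact p.Prime] (P : Sylow p L) : ((P : Subgroup L).map L.subtype).Normal :=
  have := P.characteristic_of_normal inferInstance
  inferInstance

theorem le_pCore_sup_pPrimeCore [Finite G] [Fact p.Prime] {L : Subgroup G} [L.Normal]
    [Group.IsNilpotent L] : L ≤ pCore p G ⊔ pPrimeCore p G := by
  rw [← Subgroup.subgroupOf_eq_top, ← Subgroup.index_eq_one]
  by_contra hidx
  obtain ⟨q, hq, hdvd⟩ := Nat.exists_prime_and_dvd hidx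
  have : Fact q.Prime := ⟨hq⟩
  obtain ⟨P⟩ : Nonempty (Sylow q L) := inferInstance
  have hPq : IsPGroup q ((P : Subgroup L).map L.subtype) := P.2.map _
  have hPn := sylow_map_subtype_normal P
  have hle : (P : Subgroup L).map L.subtype ≤ pCore p G ⊔ pPrimeCore p G := by
    by_cases hqp : q = p
    · subst hqp
      exact (le_pCore hPq).trans le_sup_left
    · obtain ⟨n, hn⟩ := IsPGroup.iff_card.mp hPq
      refine (le_pPrimeCore ?_).trans le_sup_right
      rw [hn]
      exact ((Nat.coprime_primes hq Fact.out).mpr hqp).pow_left n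
  exact P.not_dvd_index
    (hdvd.trans (Subgroup.index_dvd_of_le (Subgroup.map_le_iff_le_comap.mp hle)))

theorem fittingSubgroup_le_sup [Finite G] [Fact p.Prime] :
    fittingSubgroup G ≤ pCore p G ⊔ pPrimeCore p G :=
  sSup_le fun _ ⟨_, _⟩ ↦ le_pCore_sup_pPrimeCore

theorem le_pCore_of_le_fittingSubgroup [Finite G] [Fact p.Prime] {X : Subgroup G}
    (hX : IsPGroup p X) (hXF : X ≤ fittingSubgroup G) : X ≤ pCore p G :=
  le_pCore_of_le_sup hX (hXF.trans fittingSubgroup_le_sup)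

theorem le_fittingSubgroup {H : Subgroup G} [H.Normal] [Group.IsNilpotent H] :
    H ≤ fittingSubgroup G :=
  le_sSup ⟨inferInstance, inferInstance⟩

theorem pCore_le_fittingSubgroup [Finite G] [Fact p.Prime] : pCore p G ≤ fittingSubgroup G :=
  have := (isPGroup_pCore (p := p) (G := G)).isNilpotent
  le_fittingSubgroup

instance isNilpotent_fittingSubgroup [Finite G] : Group.IsNilpotent (fittingSubgroup G) := by
  refine (Group.isNilpotent_of_finite_tfae.out 0 3).mpr ?_
  intro p _ P
  have hle : (P : Subgroup (fittingSubgroup G)) ≤ (pCore p G).subgroupOf (fittingSubgroup G) :=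
    Subgroup.map_le_iff_le_comap.mp
      (le_pCore_of_le_fittingSubgroup (P.2.map _) (Subgroup.map_subtype_le _))
  rw [← P.3 (isPGroup_pCore.comap_of_injective _ (Subgroup.subtype_injective _)) hle]
  infer_instance

end Cores

/-- The `p'`-part of the Fitting subgroup of a finite group. -/
def fittingPPrime (p : ℕ) (G : Type*) [Group G] : Subgroup G :=
  fittingSubgroup G ⊓ pPrimeCore p G

section FittingPPrime

variable {p : ℕ} {G : Type*} [Group G]

instance fittingPPrime_normal : (fittingPPrime p G).Normal :=
  Subgroup.normal_inf_normal _ _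

variable [Finite G]

instance isNilpotent_fittingPPrime : Group.IsNilpotent (fittingPPrime p G) :=
  Group.nilpotent_of_mulEquiv (Subgroup.subgroupOfEquivOfLe inf_le_left)

theorem coprime_card_fittingPPrime : (Nat.card (fittingPPrime p G)).Coprime p :=
  coprime_card_pPrimeCore.coprime_dvd_left (Subgroup.card_dvd_of_le inf_le_right)

theorem pCore_le_centralizer_fittingPPrime [Fact p.Prime] :
    pCore p G ≤ Subgroup.centralizer (fittingPPrime p G : Set G) :=
  pCore_le_centralizer_pPrimeCore.trans (Subgroup.centralizer_le inf_le_right)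

theorem fittingSubgroup_le_pCore_sup_fittingPPrime [Fact p.Prime] :
    fittingSubgroup G ≤ pCore p G ⊔ fittingPPrime p G := by
  intro x hx
  obtain ⟨a, ha, b, hb, rfl⟩ := Subgroup.mem_sup_of_normal_left.mp
    (fittingSubgroup_le_sup (p := p) hx)
  have hbF : b ∈ fittingSubgroup G :=
    (Subgroup.mul_mem_cancel_left _ (pCore_le_fittingSubgroup ha)).mp hx
  exact mul_mem (Subgroup.mem_sup_left ha) (Subgroup.mem_sup_right ⟨hbF, hb⟩)

end FittingPPrime

section Fitting

variable {G : Type*} [Group G]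

/-- In a descent through the derived series, `D = C ⊓ G⁽ᵐ⁾` has `⁅D, D⁆ ≤ F(G)`, which `D`
centralizes, so `D` is nilpotent of class at most two. -/
theorem centralizer_fittingSubgroup_le [Group.IsSolvable G] :
    Subgroup.centralizer (fittingSubgroup G : Set G) ≤ fittingSubgroup G := by
  obtain ⟨n, hn⟩ := Group.IsSolvable.solvable (G := G)
  suffices ∀ m, Subgroup.centralizer (fittingSubgroup G : Set G) ⊓ derivedSeries G m ≤
      fittingSubgroup G → Subgroup.centralizer (fittingSubgroup G : Set G) ≤ fittingSubgroup G from
    this n (by rw [hn, inf_bot_eq]; exact bot_le)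
  intro m hm
  induction m with
  | zero => simpa using hm
  | succ m ih =>
    apply ih
    set C := Subgroup.centralizer (fittingSubgroup G : Set G)
    have hcomm : ⁅C ⊓ derivedSeries G m, C ⊓ derivedSeries G m⁆ ≤ fittingSubgroup G :=
      (le_inf
        ((Subgroup.commutator_mono inf_le_left le_rfl).trans (Subgroup.commutator_le_left C _))
        (Subgroup.commutator_mono inf_le_right inf_le_right)).trans hm
    have : Group.IsNilpotent (C ⊓ derivedSeries G m : Subgroup G) := by
      refine Subgroup.isNilpotent_of_lowerCentralSeries_eq_bot (n := 2) ?_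
      rw [Subgroup.lowerCentralSeries_succ, Subgroup.lowerCentralSeries_succ,
        Subgroup.lowerCentralSeries_zero, Subgroup.commutator_eq_bot_iff_le_centralizer]
      exact hcomm.trans (Subgroup.le_centralizer_iff.mp inf_le_left)
    exact le_fittingSubgroup

theorem normal_of_le_sup_of_not_dvd_relIndex [Finite G] {p : ℕ} [Fact p.Prime]
    {N K P : Subgroup G} [K.Normal] (hN : ∀ X : Subgroup G, X ⊔ N = ⊤ → X = ⊤)
    (hP : IsPGroup p P) (hPK : P ≤ K) (hKN : K ≤ P ⊔ N) (hidx : ¬ p ∣ P.relIndex K) :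
    P.Normal := by
  have hPK' : IsPGroup p (P.subgroupOf K) :=
    hP.comap_of_injective _ (Subgroup.subtype_injective _)
  have hfrattini := Sylow.normalizer_sup_eq_top (hPK'.toSylow hidx)
  have hmap : ((hPK'.toSylow hidx : Sylow p K) : Subgroup K).map K.subtype = P := by
    change (P.subgroupOf K).map K.subtype = P
    rw [Subgroup.subgroupOf_map_subtype, inf_eq_left.mpr hPK]
  rw [hmap] at hfrattini
  refine Subgroup.normalizer_eq_top_iff.mp (hN _ (top_le_iff.mp (hfrattini.symm.le.trans ?_)))
  exact sup_le le_sup_left (hKN.trans (sup_le_sup_right Subgroup.le_normalizer N))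

theorem isNilpotent_comap_of_ker_nongenerator [Finite G] {H : Type*} [Group H] {f : G →* H}
    (hf : Function.Surjective f) (hker : ∀ X : Subgroup G, X ⊔ f.ker = ⊤ → X = ⊤)
    {L : Subgroup H} [L.Normal] [Group.IsNilpotent L] : Group.IsNilpotent (L.comap f) := by
  have : Finite H := Finite.of_surjective f hf
  refine (Group.isNilpotent_of_finite_tfae.out 0 3).mpr ?_
  intro p _ P
  set P' : Subgroup G := (P : Subgroup (L.comap f)).map (L.comap f).subtype
  have hP' : P'.subgroupOf (L.comap f) = P :=
    Subgroup.comap_map_eq_self_of_injective (Subgroup.subtype_injective _) _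
  have hP'L : P' ≤ L.comap f := Subgroup.map_subtype_le _
  have hmap : P'.map f =
      ((P.mapSurjective (f.subgroupComap_surjective_of_surjective L hf) : Sylow p L) :
        Subgroup L).map L.subtype := by
    rw [Sylow.coe_mapSurjective, Subgroup.map_map, Subgroup.map_map]
    rfl
  have hnormal : (P'.map f).Normal := hmap ▸ sylow_map_subtype_normal _
  have hidx : ¬ p ∣ P'.relIndex ((P'.map f).comap f) := fun h ↦ P.not_dvd_index (by
    rw [← hP']
    exact h.trans ⟨_, (Subgroup.relIndex_mul_relIndex _ _ _ (Subgroup.le_comap_map f P')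
      (Subgroup.comap_mono (Subgroup.map_le_iff_le_comap.mpr hP'L))).symm⟩)
  have := normal_of_le_sup_of_not_dvd_relIndex hker (P.2.map _) (Subgroup.le_comap_map f P')
    (Subgroup.comap_map_eq f P').le hidx
  rw [← hP']
  infer_instance

end Fitting

/-! ### Elementary abelian subgroups of `G / F(G)` -/

/-- `E` is an elementary abelian `p`-subgroup. -/
structure IsElementaryAbelian {G : Type*} [Group G] (p : ℕ) (E : Subgroup G) : Prop where
  commute : ∀ x ∈ E, ∀ y ∈ E, Commute x y
  pow_eq_one : ∀ x ∈ E, x ^ p = 1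

/-- The elementary abelian `p`-subgroups of `G` have rank at most `e`. -/
def ElementaryRankLE (p e : ℕ) (G : Type*) [Group G] : Prop :=
  ∀ E : Subgroup G, IsElementaryAbelian p E → Nat.card E ≤ p ^ e

section Elementary

variable {p : ℕ} {G H : Type*} [Group G] [Group H]

theorem IsElementaryAbelian.isPGroup {E : Subgroup G} (hE : IsElementaryAbelian p E) :
    IsPGroup p E :=
  fun x ↦ ⟨1, Subtype.ext (by simpa using hE.pow_eq_one x x.2)⟩

theorem InducesElementaryAbelian.of_map {f : G →* H} {Q R : Subgroup G}
    (hE : IsElementaryAbelian p (Q.map f)) (hQR : Q ≤ Subgroup.normalizer (R : Set G))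
    (hker : Q ⊓ f.ker ≤ Subgroup.centralizer (R : Set G)) : InducesElementaryAbelian p Q R := by
  refine ⟨hQR, fun x hx y hy ↦ hker ⟨?_, ?_⟩, fun x hx ↦ hker ⟨Q.pow_mem hx p, ?_⟩⟩
  · exact (⁅(⟨x, hx⟩ : Q), ⟨y, hy⟩⁆ : Q).2
  · refine f.mem_ker.mpr ?_
    rw [map_commutatorElement, commutatorElement_eq_one_iff_commute]
    exact hE.commute _ (Subgroup.mem_map_of_mem f hx) _ (Subgroup.mem_map_of_mem f hy)
  · refine f.mem_ker.mpr ?_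
    rw [map_pow]
    exact hE.pow_eq_one _ (Subgroup.mem_map_of_mem f hx)

theorem CDimLE.subgroup {k : ℕ} (hG : CDimLE k G) (M : Subgroup G) : CDimLE k M := by
  intro m S hS
  have hcoe : ∀ U : Set M, (Subgroup.centralizer (Subtype.val '' U)).subgroupOf M =
      Subgroup.centralizer U := fun U ↦ by
    ext x
    simp [Subgroup.mem_subgroupOf, Subgroup.mem_centralizer_iff, Subtype.ext_iff]
  refine hG m (fun i ↦ Subtype.val '' (Set.centralizer (Set.centralizer (S i)))) ?_
  refine Monotone.strictMono_of_injective (fun i j hij ↦ ?_) fun i j hij ↦ ?_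
  · exact Subgroup.centralizer_le (Set.image_mono (Set.centralizer_subset (hS.monotone hij)))
  · have hsub := congrArg (Subgroup.subgroupOf · M) hij
    simp only [hcoe] at hsub
    refine hS.injective (SetLike.coe_injective ?_)
    change Set.centralizer (S i) = Set.centralizer (S j)
    rw [← Set.centralizer_centralizer_centralizer (S i),
      ← Set.centralizer_centralizer_centralizer (S j)]
    exact congrArg SetLike.coe hsub

theorem exists_supplement_of_nongenerators [Finite G] (N : Subgroup G) :
    ∃ M : Subgroup G, N ⊔ M = ⊤ ∧ ∀ X : Subgroup M, X ⊔ N.subgroupOf M = ⊤ → X = ⊤ := by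
  obtain ⟨M, hM, hmin⟩ := (Set.toFinite {M : Subgroup G | N ⊔ M = ⊤}).exists_minimal ⟨⊤, by simp⟩
  refine ⟨M, hM, fun X hX ↦ ?_⟩
  have hMX : M ≤ N ⊔ X.map M.subtype := by
    have hmap := congrArg (Subgroup.map M.subtype) hX
    rw [Subgroup.map_sup, Subgroup.subgroupOf_map_subtype, ← MonoidHom.range_eq_map,
      Subgroup.range_subtype] at hmap
    exact hmap.symm.le.trans (sup_le le_sup_right (inf_le_left.trans le_sup_left))
  have hle : M ≤ X.map M.subtype :=
    hmin (top_le_iff.mp (hM.symm.le.trans (sup_le le_sup_left hMX))) (Subgroup.map_subtype_le X)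
  rw [← Subgroup.subgroupOf_eq_top.mpr hle]
  exact (Subgroup.comap_map_eq_self_of_injective M.subtype_injective X).symm

theorem exists_isPGroup_map_eq [Finite G] [Fact p.Prime] {f : G →* H}
    (hf : Function.Surjective f) {E : Subgroup H} (hE : IsPGroup p E) :
    ∃ Q : Subgroup G, IsPGroup p Q ∧ Q.map f = E := by
  obtain ⟨P⟩ : Nonempty (Sylow p (E.comap f)) := inferInstance
  have : Finite H := Finite.of_surjective f hf
  refine ⟨(P : Subgroup (E.comap f)).map (E.comap f).subtype, P.2.map _, ?_⟩
  have htop : (P.mapSurjective (f.subgroupComap_surjective_of_surjective E hf) : Subgroup E) = ⊤ :=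
    ((P.mapSurjective _).3 (hE.to_subgroup ⊤) le_top).symm
  have hmap := congrArg (Subgroup.map E.subtype) htop
  rw [Sylow.coe_mapSurjective, ← MonoidHom.range_eq_map, Subgroup.range_subtype,
    Subgroup.map_map] at hmap
  rw [Subgroup.map_map]
  exact hmap

theorem comap_fittingSubgroup_le [Finite G] {f : G →* H} (hf : Function.Surjective f)
    (hker : ∀ X : Subgroup G, X ⊔ f.ker = ⊤ → X = ⊤) :
    (fittingSubgroup H).comap f ≤ fittingSubgroup G :=
  have : Finite H := Finite.of_surjective f hf
  have := isNilpotent_comap_of_ker_nongenerator hf hker (L := fittingSubgroup H)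
  le_fittingSubgroup

theorem le_pCore_of_le_normalizer [Finite G] [Fact p.Prime] {M T : Subgroup G}
    (hM : fittingSubgroup G ⊔ M = ⊤) (hT : IsPGroup p T)
    (hMT : M ≤ Subgroup.normalizer (T : Set G))
    (hFT : fittingPPrime p G ≤ Subgroup.normalizer (T : Set G)) : T ≤ pCore p G := by
  have hle : Subgroup.normalizer (T : Set G) ≤
      Subgroup.normalizer ((T ⊔ pCore p G : Subgroup G) : Set G) :=
    Subgroup.normalizer_le_normalizer_sup_normal
  have : (T ⊔ pCore p G).Normal := by
    rw [← Subgroup.normalizer_eq_top_iff, ← top_le_iff, ← hM]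
    refine sup_le (fittingSubgroup_le_pCore_sup_fittingPPrime.trans
      (sup_le (le_sup_right.trans Subgroup.le_normalizer) (hFT.trans hle))) (hMT.trans hle)
  exact le_sup_left.trans (le_pCore (hT.to_sup_of_normal_right isPGroup_pCore))

theorem le_comap_fittingSubgroup [Finite G] [Fact p.Prime] [Group.IsSolvable H]
    {f : G →* H} (hf : Function.Surjective f)
    (hF : (fittingSubgroup H).comap f ≤ fittingSubgroup G) {D : Subgroup G} [D.Normal]
    (hD : D ≤ Subgroup.centralizer (fittingPPrime p G : Set G)) (hDp : D ⊓ pCore p G ≤ f.ker) :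
    D ≤ (fittingSubgroup H).comap f := by
  rw [← Subgroup.map_le_iff_le_comap]
  refine le_trans ?_ centralizer_fittingSubgroup_le
  rw [Subgroup.le_centralizer_iff,
    ← Subgroup.map_comap_eq_self_of_surjective hf (fittingSubgroup H)]
  refine (Subgroup.map_mono
    (hF.trans (fittingSubgroup_le_pCore_sup_fittingPPrime (p := p)))).trans ?_
  rw [Subgroup.map_sup]
  refine sup_le ?_ ?_ <;> rw [← Subgroup.commutator_eq_bot_iff_le_centralizer,
    ← Subgroup.map_commutator, Subgroup.map_eq_bot_iff]
  · exact (le_inf (Subgroup.commutator_le_right _ _) (Subgroup.commutator_le_left _ _)).trans hDp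
  · rw [Subgroup.commutator_eq_bot_iff_le_centralizer.mpr (Subgroup.le_centralizer_iff.mp hD)]
    exact bot_le

theorem supplement_map_le_pCore [Finite G] [Fact p.Prime] {M : Subgroup G}
    (hM : fittingSubgroup G ⊔ M = ⊤) {D : Subgroup M} [D.Normal]
    (hD : D ≤ (Subgroup.centralizer (fittingPPrime p G : Set G)).subgroupOf M) :
    (D ⊓ pCore p M).map M.subtype ≤ pCore p G := by
  refine le_pCore_of_le_normalizer hM ((isPGroup_pCore.to_le inf_le_right).map _) ?_ ?_
  · have hmap := Subgroup.le_normalizer_map (H := D ⊓ pCore p M) M.subtype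
    rwa [Subgroup.normalizer_eq_top, ← MonoidHom.range_eq_map, Subgroup.range_subtype] at hmap
  · refine le_trans (Subgroup.le_centralizer_iff.mp ?_) (Subgroup.centralizer_le_normalizer _)
    exact (Subgroup.map_mono inf_le_left).trans (Subgroup.map_le_iff_le_comap.mpr hD)

theorem ker_mk'_comp_subtype (N M : Subgroup G) [N.Normal] :
    ((QuotientGroup.mk' N).comp M.subtype).ker = N.subgroupOf M := by
  rw [← MonoidHom.comap_ker, QuotientGroup.ker_mk']
  rfl

theorem mk'_comp_subtype_surjective {N M : Subgroup G} [N.Normal] (h : N ⊔ M = ⊤) :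
    Function.Surjective ((QuotientGroup.mk' N).comp M.subtype) := by
  have hmap := congrArg (Subgroup.map (QuotientGroup.mk' N)) h
  rw [Subgroup.map_sup, QuotientGroup.map_mk'_self, bot_sup_eq,
    Subgroup.map_top_of_surjective _ (QuotientGroup.mk'_surjective N)] at hmap
  rw [← MonoidHom.range_eq_top, MonoidHom.range_comp, Subgroup.range_subtype, hmap]

section Supplement

variable [Finite G] [Fact p.Prime] {M : Subgroup G} {Q : Subgroup M}

theorem inf_centralizer_fittingPPrime_le [Group.IsSolvable G] (hM : fittingSubgroup G ⊔ M = ⊤)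
    (hMF : ∀ X : Subgroup M, X ⊔ (fittingSubgroup G).subgroupOf M = ⊤ → X = ⊤)
    (hQ : IsPGroup p Q) :
    Subgroup.centralizer (fittingPPrime p M : Set M) ⊓
      (Subgroup.centralizer (fittingPPrime p G : Set G)).subgroupOf M ⊓ Q ≤
        (fittingSubgroup G).subgroupOf M := by
  set D := Subgroup.centralizer (fittingPPrime p M : Set M) ⊓
    (Subgroup.centralizer (fittingPPrime p G : Set G)).subgroupOf M
  have hf := mk'_comp_subtype_surjective hM
  rw [← ker_mk'_comp_subtype] at hMF ⊢
  have hF := comap_fittingSubgroup_le hf hMF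
  have hker : D ⊓ pCore p M ≤ ((QuotientGroup.mk' (fittingSubgroup G)).comp M.subtype).ker := by
    rw [ker_mk'_comp_subtype]
    exact Subgroup.map_le_iff_le_comap.mp
      ((supplement_map_le_pCore hM inf_le_right).trans pCore_le_fittingSubgroup)
  have hD : D ≤ fittingSubgroup M := (le_comap_fittingSubgroup hf hF inf_le_left hker).trans hF
  exact (le_inf inf_le_left (le_pCore_of_le_fittingSubgroup (hQ.to_le inf_le_right)
    (inf_le_left.trans hD))).trans hker

theorem relIndex_subgroupOf_fittingSubgroup_le [Group.IsSolvable G] (hM : fittingSubgroup G ⊔ M = ⊤)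
    (hMF : ∀ X : Subgroup M, X ⊔ (fittingSubgroup G).subgroupOf M = ⊤ → X = ⊤)
    (hQ : IsPGroup p Q) {k : ℕ} (hG : CDimLE k G)
    (hE : IsElementaryAbelian p
      (Q.map ((QuotientGroup.mk' (fittingSubgroup G)).comp M.subtype))) :
    ((fittingSubgroup G).subgroupOf M).relIndex Q ≤ p ^ (2 * k) := by
  have hker := ker_mk'_comp_subtype (fittingSubgroup G) M
  have hF : (fittingSubgroup G).subgroupOf M ≤ fittingSubgroup M := by
    rw [← hker] at hMF ⊢
    exact (MonoidHom.ker_le_comap _ _).trans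
      (comap_fittingSubgroup_le (mk'_comp_subtype_surjective hM) hMF)
  have hQM : InducesElementaryAbelian p Q (fittingPPrime p M) := by
    refine .of_map hE Subgroup.le_normalizer_of_normal ?_
    rw [hker]
    exact (le_pCore_of_le_fittingSubgroup (hQ.to_le inf_le_left) (inf_le_right.trans hF)).trans
      pCore_le_centralizer_fittingPPrime
  have hQG : InducesElementaryAbelian p (Q.map M.subtype) (fittingPPrime p G) := by
    refine .of_map (f := QuotientGroup.mk' (fittingSubgroup G)) (by rwa [Subgroup.map_map])
      Subgroup.le_normalizer_of_normal ?_
    rw [QuotientGroup.ker_mk']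
    exact (le_pCore_of_le_fittingSubgroup ((hQ.map _).to_le inf_le_left) inf_le_right).trans
      pCore_le_centralizer_fittingPPrime
  set C := Subgroup.centralizer (fittingPPrime p M : Set M)
  set C' := Subgroup.centralizer (fittingPPrime p G : Set G)
  calc ((fittingSubgroup G).subgroupOf M).relIndex Q
      ≤ (C ⊓ C'.subgroupOf M ⊓ Q).relIndex Q :=
        Subgroup.relIndex_le_of_le_left (inf_centralizer_fittingPPrime_le hM hMF hQ)
          Subgroup.FiniteIndex.index_ne_zero
    _ = (C ⊓ C'.subgroupOf M).relIndex Q := Subgroup.inf_relIndex_right _ _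
    _ ≤ C.relIndex Q * C'.relIndex (Q.map M.subtype) := by
        rw [← Subgroup.relIndex_comap]
        exact Subgroup.relIndex_inf_le
    _ ≤ p ^ k * p ^ k := Nat.mul_le_mul
        ((hG.subgroup M).relIndex_centralizer_le coprime_card_fittingPPrime hQM)
        (hG.relIndex_centralizer_le coprime_card_fittingPPrime hQG)
    _ = p ^ (2 * k) := by rw [two_mul, pow_add]

end Supplement

theorem CDimLE.elementaryRankLE [Finite G] [Group.IsSolvable G] [Fact p.Prime] {k : ℕ}
    (hG : CDimLE k G) : ElementaryRankLE p (2 * k) (G ⧸ fittingSubgroup G) := by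
  intro E hE
  obtain ⟨M, hM, hMF⟩ := exists_supplement_of_nongenerators (fittingSubgroup G)
  obtain ⟨Q, hQ, rfl⟩ := exists_isPGroup_map_eq (mk'_comp_subtype_surjective hM) hE.isPGroup
  rw [← Subgroup.relIndex_ker, ker_mk'_comp_subtype]
  exact relIndex_subgroupOf_fittingSubgroup_le hM hMF hQ hG hE

end Elementary

/-! ### Torsion in finite rings and finite abelian groups -/

section Torsion

open scoped AddSubgroup

section Ring

variable {E : Type*} [Ring E]

theorem natCast_pow_dvd_mul_left (p i : ℕ) {u : E} (h : (p : E) ^ i ∣ u) (c : E) :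
    (p : E) ^ i ∣ c * u := by
  obtain ⟨w, rfl⟩ := h
  exact ⟨c * w, (((Nat.cast_commute p c).pow_left i).left_comm w).symm⟩

theorem natCast_pow_succ_dvd_mul_of_dvd {p i : ℕ} {c z : E} (hc : (p : E) ^ 2 ∣ c)
    (hz : (p : E) ^ i ∣ p * z) :
    (p : E) ^ (i + 1) ∣ c * z ∧ (p : E) ^ (i + 1) ∣ z * c := by
  obtain ⟨d, rfl⟩ := hc
  have hp : ∀ c : E, (p : E) * c = c * p := fun c ↦ (Nat.cast_commute p c).eq
  have hleft : (p : E) ^ 2 * d * z = p * (d * (p * z)) := by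
    rw [hp z, ← mul_assoc d, ← hp (d * z), sq]; noncomm_ring
  have hright : z * ((p : E) ^ 2 * d) = p * (p * z * d) := by
    rw [sq, hp z]
    rw [← mul_assoc, ← mul_assoc, ← mul_assoc, ← mul_assoc, ← hp z]
  rw [hleft, hright, pow_succ']
  exact ⟨mul_dvd_mul_left _ (natCast_pow_dvd_mul_left p i hz d),
    mul_dvd_mul_left _ (dvd_mul_of_dvd_left hz d)⟩

theorem natCast_pow_succ_dvd_pow_sub_pow_sub {p i : ℕ} {x y : E} (hx : (p : E) ^ 2 ∣ x - 1)
    (hy : (p : E) ^ 2 ∣ y - 1) (hxy : (p : E) ^ i ∣ p * (x - y)) (l : ℕ) :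
    (p : E) ^ (i + 1) ∣ x ^ l - y ^ l - l * (x - y) := by
  induction l with
  | zero => simp
  | succ l ih =>
    have hyl : (p : E) ^ 2 ∣ y ^ l - 1 := by
      simpa using hy.trans ((Commute.one_right y).sub_dvd_pow_sub_pow l)
    have hl : (l : E) * ((x - 1) * (x - y)) = (x - 1) * (l * (x - y)) :=
      (Nat.cast_commute l (x - 1)).left_comm _
    have hstep : x ^ (l + 1) - y ^ (l + 1) - (l + 1 : ℕ) * (x - y) =
        x * (x ^ l - y ^ l - l * (x - y)) + (l : E) * ((x - 1) * (x - y)) +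
          (x - y) * (y ^ l - 1) := by
      rw [hl, pow_succ', pow_succ']
      push_cast
      noncomm_ring
    rw [hstep]
    exact dvd_add (dvd_add (natCast_pow_dvd_mul_left p _ ih x)
      (natCast_pow_dvd_mul_left p _ (natCast_pow_succ_dvd_mul_of_dvd hx hxy).1 _))
      (natCast_pow_succ_dvd_mul_of_dvd hyl hxy).2

-- If `p ^ i ∣ p (x - y)`, then `0 = x ^ p - y ^ p ≡ p (x - y)` modulo `p ^ (i + 1)`.
theorem natCast_mul_sub_eq_zero_of_pow_eq_pow {p n : ℕ} (hn : (p : E) ^ n = 0) {x y : E}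
    (hx : (p : E) ^ 2 ∣ x - 1) (hy : (p : E) ^ 2 ∣ y - 1) (hxy : x ^ p = y ^ p) :
    (p : E) * (x - y) = 0 := by
  have hdvd : ∀ i : ℕ, (p : E) ^ i ∣ p * (x - y) := by
    intro i
    induction i with
    | zero => simp
    | succ i ih =>
      have := natCast_pow_succ_dvd_pow_sub_pow_sub hx hy ih p
      rwa [hxy, sub_self, zero_sub, dvd_neg] at this
  simpa [hn] using hdvd n

end Ring

theorem card_le_mul_of_card_fiber_le {α β : Type*} [Finite α] [Finite β] (f : α → β) {n : ℕ}
    (h : ∀ a₀ : α, Nat.card {a // f a = f a₀} ≤ n) : Nat.card α ≤ n * Nat.card β := by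
  classical
  have := Fintype.ofFinite α
  have := Fintype.ofFinite β
  have himage := Finset.card_le_mul_card_image (f := f) Finset.univ n (by
    intro a ha
    obtain ⟨a₀, -, rfl⟩ := Finset.mem_image.mp ha
    have := h a₀
    rwa [Nat.card_eq_fintype_card, Fintype.card_subtype] at this)
  rw [Nat.card_eq_fintype_card, Nat.card_eq_fintype_card]
  exact himage.trans (Nat.mul_le_mul_left _ (Finset.card_le_univ _))

section AddCommGroup

variable {B : Type*} [AddCommGroup B] [Finite B]

theorem index_range_nsmulAddMonoidHom (n : ℕ) :
    (nsmulAddMonoidHom n : B →+ B).range.index = Nat.card B[n] := by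
  have hker : (nsmulAddMonoidHom n : B →+ B).ker = B[n] := by
    ext x
    rw [AddMonoidHom.mem_ker, nsmulAddMonoidHom_apply, AddSubgroup.torsionBy.nsmul_iff]
  rw [AddSubgroup.index_range, hker]

theorem card_torsionBy_mul_le (m n : ℕ) :
    Nat.card B[(m * n : ℕ)] ≤ Nat.card B[n] * Nat.card B[m] := by
  refine card_le_mul_of_card_fiber_le (β := B[m])
    (fun x ↦ ⟨n • x.1, AddSubgroup.torsionBy.nsmul_iff.mpr ?_⟩) fun x₀ ↦ ?_
  · rw [← mul_nsmul']
    exact AddSubgroup.torsionBy.nsmul_iff.mp x.2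
  · refine Nat.card_le_card_of_injective (β := B[n])
      (fun x ↦ ⟨x.1.1 - x₀.1, AddSubgroup.torsionBy.nsmul_iff.mpr ?_⟩) fun x y h ↦ ?_
    · rw [nsmul_sub, sub_eq_zero]
      exact congrArg Subtype.val x.2
    · exact Subtype.ext (Subtype.ext (sub_left_injective (Subtype.mk.inj h)))

end AddCommGroup

section FiniteRing

variable {E : Type*} [Ring E] [Finite E] (U : Subgroup Eˣ)

theorem card_le_card_congruent_mul (n : ℕ) :
    Nat.card U ≤ Nat.card {u : U // (n : E) ∣ (u : Eˣ) - 1} * Nat.card E[n] := by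
  have hmem : ∀ z : E, z ∈ (nsmulAddMonoidHom n : E →+ E).range ↔ (n : E) ∣ z := fun z ↦ by
    simp [AddMonoidHom.mem_range, dvd_def, eq_comm]
  rw [← index_range_nsmulAddMonoidHom, AddSubgroup.index_eq_card]
  refine card_le_mul_of_card_fiber_le
    (fun u : U ↦ ((u.1 : E) : E ⧸ (nsmulAddMonoidHom n : E →+ E).range)) fun u₀ ↦ ?_
  refine Nat.card_le_card_of_injective
    (β := {u : U // (n : E) ∣ (u : Eˣ) - 1}) (fun u ↦ ⟨u₀⁻¹ * u.1, ?_⟩)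
    fun u v h ↦ Subtype.ext (mul_left_cancel (Subtype.mk.inj h))
  have hdvd : (n : E) ∣ u.1.1 - u₀.1 := by
    rw [← hmem, ← neg_sub, neg_mem_iff, sub_eq_neg_add]
    exact QuotientAddGroup.eq.mp u.2
  have hmul := natCast_pow_dvd_mul_left n 1 (by simpa using hdvd) ((u₀⁻¹ : U).1 : E)
  simpa [mul_sub] using hmul

theorem card_congruent_le {p n : ℕ} (hn : (p : E) ^ n = 0) (W : Subgroup U)
    (hW : ∀ u, u ^ p ∈ W) :
    Nat.card {u : U // ((p * p : ℕ) : E) ∣ (u : Eˣ) - 1} ≤ Nat.card E[p] * Nat.card W := by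
  refine card_le_mul_of_card_fiber_le (β := W) (fun u ↦ ⟨u.1 ^ p, hW u.1⟩) fun u₀ ↦ ?_
  refine Nat.card_le_card_of_injective (β := E[p])
    (fun u ↦ ⟨(u.1.1.1 : E) - u₀.1.1, AddSubgroup.torsionBy.nsmul_iff.mpr ?_⟩) fun u v h ↦
    Subtype.ext (Subtype.ext (Subtype.ext (Units.ext (sub_left_injective (Subtype.mk.inj h)))))
  rw [nsmul_eq_mul]
  refine natCast_mul_sub_eq_zero_of_pow_eq_pow hn ?_ ?_ ?_
  · simpa [sq] using u.1.2
  · simpa [sq] using u₀.2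
  · simpa using congrArg (fun w : W ↦ (w.1.1 : E)) u.2

-- Two of the factors come from passing to the units congruent to `1` modulo `p ^ 2`, the third
-- from the fibres of the `p`-th power map on those.
theorem index_le_card_torsionBy_pow_three {p n : ℕ} (hn : (p : E) ^ n = 0) (W : Subgroup U)
    (hW : ∀ u, u ^ p ∈ W) : W.index ≤ Nat.card E[p] ^ 3 := by
  refine Nat.le_of_mul_le_mul_right ?_ (Nat.card_pos (α := W))
  calc W.index * Nat.card W = Nat.card U := W.index_mul_card
    _ ≤ (Nat.card E[p] * Nat.card W) * (Nat.card E[p] * Nat.card E[p]) :=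
        (card_le_card_congruent_mul U (p * p)).trans
          (Nat.mul_le_mul (card_congruent_le U hn W hW) (card_torsionBy_mul_le p p))
    _ = Nat.card E[p] ^ 3 * Nat.card W := by ring

end FiniteRing

section End

variable {B : Type*} [AddCommGroup B] [Finite B] {p e : ℕ} [Fact p.Prime]

theorem exists_fin_closure_eq_top [Module (ZMod p) B] :
    ∃ d, Nat.card B = p ^ d ∧ ∃ b : Fin d → B, AddSubgroup.closure (Set.range b) = ⊤ := by
  let basis := Module.finBasis (ZMod p) B
  refine ⟨_, by rw [Module.natCard_eq_pow_finrank (K := ZMod p) (V := B), Nat.card_zmod], basis, ?_⟩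
  refine (AddSubgroup.toZModSubmodule (M := B) p).injective ?_
  rw [map_top, eq_top_iff, ← basis.span_eq, Submodule.span_le]
  exact AddSubgroup.subset_closure

theorem exists_closure_sup_range_nsmul_eq_top (h : Nat.card B[p] ≤ p ^ e) :
    ∃ d ≤ e, ∃ b : Fin d → B,
      AddSubgroup.closure (Set.range b) ⊔ (nsmulAddMonoidHom p : B →+ B).range = ⊤ := by
  have hp : ∀ x : B ⧸ (nsmulAddMonoidHom p : B →+ B).range, p • x = 0 := by
    intro x
    induction x using QuotientAddGroup.induction_on with
    | _ x => exact (QuotientAddGroup.eq_zero_iff _).mpr ⟨x, rfl⟩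
  obtain ⟨d, hcard, v, hv⟩ := @exists_fin_closure_eq_top _ _ _ p _ (AddCommGroup.zmodModule hp)
  choose b hb using fun i ↦ QuotientAddGroup.mk_surjective (v i)
  refine ⟨d, ?_, b, ?_⟩
  · rw [← index_range_nsmulAddMonoidHom, AddSubgroup.index_eq_card, hcard] at h
    exact (Nat.pow_le_pow_iff_right (Nat.Prime.one_lt Fact.out)).mp h
  · have hvb : QuotientAddGroup.mk' (nsmulAddMonoidHom p : B →+ B).range '' Set.range b =
        Set.range v := by
      rw [← Set.range_comp]
      exact congrArg Set.range (funext hb)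
    conv_lhs => rw [← QuotientAddGroup.ker_mk' (nsmulAddMonoidHom p : B →+ B).range]
    rw [← AddSubgroup.comap_map_eq, AddMonoidHom.map_closure, hvb, hv, AddSubgroup.comap_top]

theorem finite_addMonoidEnd : Finite (AddMonoid.End B) :=
  DFunLike.finite (B →+ B)

-- An endomorphism killed by `p` is determined by its values on generators modulo `p`, and these
-- values are `p`-torsion elements.
theorem card_torsionBy_addMonoidEnd_le (h : Nat.card B[p] ≤ p ^ e) :
    Nat.card (AddMonoid.End B)[p] ≤ p ^ (e * e) := by
  obtain ⟨d, hd, b, hb⟩ := exists_closure_sup_range_nsmul_eq_top h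
  have htorsion : ∀ (φ : (AddMonoid.End B)[p]) (x : B), p • φ.1 x = 0 := fun φ ↦
    DFunLike.congr_fun (AddSubgroup.torsionBy.nsmul_iff.mp φ.2)
  let values : (AddMonoid.End B)[p] → Fin d → B[p] := fun φ i ↦
    ⟨φ.1 (b i), AddSubgroup.torsionBy.nsmul_iff.mpr (htorsion φ (b i))⟩
  have hvalues : Function.Injective values := by
    intro φ ψ hφψ
    have hle : AddSubgroup.closure (Set.range b) ⊔ (nsmulAddMonoidHom p : B →+ B).range ≤
        AddMonoidHom.eqLocus (φ.1 : B →+ B) (ψ.1 : B →+ B) := by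
      refine sup_le ((AddSubgroup.closure_le _).mpr ?_) ?_
      · rintro _ ⟨i, rfl⟩
        exact congrArg Subtype.val (congrFun hφψ i)
      · rintro _ ⟨x, rfl⟩
        change φ.1 (p • x) = ψ.1 (p • x)
        rw [map_nsmul, map_nsmul, htorsion, htorsion]
    rw [hb] at hle
    exact Subtype.ext (AddMonoidHom.ext fun x ↦ hle (AddSubgroup.mem_top x))
  calc Nat.card (AddMonoid.End B)[p] ≤ Nat.card (Fin d → B[p]) :=
        Nat.card_le_card_of_injective values hvalues
    _ = Nat.card B[p] ^ d := by rw [Nat.card_fun, Nat.card_fin]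
    _ ≤ (p ^ e) ^ e := (Nat.pow_le_pow_left h d).trans
        (Nat.pow_le_pow_right (Nat.pow_pos (Nat.Prime.pos Fact.out)) hd)
    _ = p ^ (e * e) := by rw [pow_mul]

end End

end Torsion

/-! ### Subgroups containing all `p`-th powers of a `p`-group -/

theorem inf_center_ne_bot {G : Type*} [Group G] [Group.IsNilpotent G] {N : Subgroup G} [N.Normal]
    (hN : N ≠ ⊥) : N ⊓ Subgroup.center G ≠ ⊥ := by
  classical
  have hex : ∃ i, N ⊓ (⊤ : Subgroup G).lowerCentralSeries i = ⊥ := by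
    obtain ⟨n, hn⟩ := Subgroup.nilpotent_iff_lowerCentralSeries.mp ‹Group.IsNilpotent G›
    exact ⟨n, by rw [hn, inf_bot_eq]⟩
  obtain ⟨j, hj⟩ : ∃ j, Nat.find hex = j + 1 := by
    refine Nat.exists_eq_succ_of_ne_zero fun h0 ↦ hN ?_
    simpa using (Nat.find_eq_zero hex).mp h0
  have hlast : N ⊓ (⊤ : Subgroup G).lowerCentralSeries j ≠ ⊥ :=
    Nat.find_min hex (hj ▸ Nat.lt_succ_self j)
  have hcentral : N ⊓ (⊤ : Subgroup G).lowerCentralSeries j ≤ Subgroup.center G := by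
    rw [← Subgroup.centralizer_univ, ← Subgroup.coe_top,
      ← Subgroup.commutator_eq_bot_iff_le_centralizer, eq_bot_iff, ← Nat.find_spec hex, hj]
    exact le_inf ((Subgroup.commutator_mono inf_le_left le_rfl).trans
      (Subgroup.commutator_le_left _ _)) (Subgroup.commutator_mono inf_le_right le_rfl)
  exact fun h ↦ hlast (eq_bot_iff.mpr (h ▸ le_inf inf_le_left hcentral))

theorem isMulCommutative_sup_zpowers {G : Type*} [Group G] {A : Subgroup G} [IsMulCommutative A]
    {x : G} (hx : x ∈ Subgroup.centralizer (A : Set G)) :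
    IsMulCommutative (A ⊔ Subgroup.zpowers x : Subgroup G) := by
  have hxA : Subgroup.zpowers x ≤ Subgroup.centralizer (A : Set G) := Subgroup.zpowers_le.mpr hx
  refine Subgroup.le_centralizer_iff_isMulCommutative.mp (sup_le ?_ ?_) <;>
    refine Subgroup.le_centralizer_iff.mp (sup_le ?_ ?_)
  · exact Subgroup.le_centralizer A
  · exact hxA
  · exact Subgroup.le_centralizer_iff.mp hxA
  · exact Subgroup.le_centralizer _

theorem exists_normal_isMulCommutative_centralizer_le (G : Type*) [Group G] [Finite G]
    [Group.IsNilpotent G] :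
    ∃ A : Subgroup G, A.Normal ∧ IsMulCommutative A ∧ Subgroup.centralizer (A : Set G) ≤ A := by
  obtain ⟨A, ⟨hAn, hAc⟩, hmax⟩ :=
    (Set.toFinite {A : Subgroup G | A.Normal ∧ IsMulCommutative A}).exists_maximal
      ⟨⊥, inferInstance, inferInstance⟩
  refine ⟨A, hAn, hAc, ?_⟩
  by_contra hC
  let C := Subgroup.centralizer (A : Set G)
  have hCA : C.map (QuotientGroup.mk' A) ≠ ⊥ := by
    rwa [Ne, Subgroup.map_eq_bot_iff, QuotientGroup.ker_mk']
  have := Subgroup.Normal.map (inferInstance : C.Normal) _ (QuotientGroup.mk'_surjective A)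
  obtain ⟨_, ⟨⟨x, hxC, rfl⟩, hxZ⟩, hx1⟩ :=
    (Subgroup.bot_or_exists_ne_one _).resolve_left (inf_center_ne_bot hCA)
  have hcentral : Subgroup.zpowers (QuotientGroup.mk' A x) ≤ Subgroup.center (G ⧸ A) :=
    Subgroup.zpowers_le.mpr hxZ
  have hnormal : (Subgroup.zpowers (QuotientGroup.mk' A x)).Normal :=
    ⟨fun y hy g ↦ by rwa [(Subgroup.mem_center_iff.mp (hcentral hy) g), mul_inv_cancel_right]⟩
  have hDn : (A ⊔ Subgroup.zpowers x).Normal := by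
    rw [← QuotientGroup.ker_mk' A, sup_comm, ← Subgroup.comap_map_eq, MonoidHom.map_zpowers]
    exact hnormal.comap _
  have hxA : x ∈ A := hmax ⟨hDn, isMulCommutative_sup_zpowers hxC⟩ le_sup_left
    (Subgroup.mem_sup_right (Subgroup.mem_zpowers x))
  exact hx1 ((QuotientGroup.eq_one_iff x).mpr hxA)

/-- The conjugation action of a group on a normal subgroup, as a homomorphism to the units of
the endomorphism monoid of that subgroup written additively. -/
def conjUnits {M : Type*} [Group M] (A : Subgroup M) [A.Normal] :
    M →* (AddMonoid.End (Additive A))ˣ :=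
  MonoidHom.toHomUnits
    { toFun := fun g ↦ MonoidHom.toAdditive (MulAut.conjNormal g : A ≃* A).toMonoidHom
      map_one' := by ext; simp; rfl
      map_mul' := fun g h ↦ by ext; simp; rfl }

theorem ker_conjUnits {M : Type*} [Group M] (A : Subgroup M) [A.Normal] :
    (conjUnits A).ker = Subgroup.centralizer (A : Set M) := by
  ext g
  rw [MonoidHom.mem_ker, Subgroup.mem_centralizer_iff, ← Units.val_inj]
  constructor
  · intro h a ha
    have hfix : g * a * g⁻¹ = a := congrArg (fun x : Additive A ↦ (x.toMul : M))
      (DFunLike.congr_fun h (Additive.ofMul (⟨a, ha⟩ : A)))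
    exact (mul_inv_eq_iff_eq_mul.mp hfix).symm
  · intro h
    ext a
    exact mul_inv_eq_iff_eq_mul.mpr (h _ a.toMul.2).symm

theorem index_eq_relIndex_mul_index_sup {G : Type*} [Group G] [Finite G] (A N : Subgroup G)
    [A.Normal] : N.index = N.relIndex A * (N ⊔ A).index := by
  have hpos : 0 < A.relIndex N := Nat.pos_of_ne_zero Subgroup.index_ne_zero_of_finite
  refine Nat.eq_of_mul_eq_mul_left hpos ?_
  calc A.relIndex N * N.index = (A ⊓ N).index := by
        rw [← Subgroup.inf_relIndex_right, Subgroup.relIndex_mul_index inf_le_right]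
    _ = N.relIndex A * A.index := by
        rw [← Subgroup.inf_relIndex_left, Subgroup.relIndex_mul_index inf_le_left]
    _ = A.relIndex N * (N.relIndex A * (N ⊔ A).index) := by
        rw [← Subgroup.relIndex_mul_index (le_sup_right : A ≤ N ⊔ A), Subgroup.relIndex_sup_right]
        ring

section PowSubgroup

variable {p e : ℕ}

theorem ElementaryRankLE.subgroup {G : Type*} [Group G] (hG : ElementaryRankLE p e G)
    (H : Subgroup G) : ElementaryRankLE p e H := by
  intro E hE
  rw [← Subgroup.card_map_of_injective H.subtype_injective]
  refine hG _ ⟨?_, ?_⟩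
  · rintro _ ⟨x, hx, rfl⟩ _ ⟨y, hy, rfl⟩
    exact (hE.commute x hx y hy).map H.subtype
  · rintro _ ⟨x, hx, rfl⟩
    rw [← map_pow, hE.pow_eq_one x hx, map_one]

theorem ElementaryRankLE.card_ker_powMonoidHom_le {A : Type*} [CommGroup A]
    (hA : ElementaryRankLE p e A) : Nat.card (powMonoidHom p : A →* A).ker ≤ p ^ e :=
  hA _ ⟨fun x _ y _ ↦ Commute.all x y, fun _ ↦ id⟩

theorem ElementaryRankLE.index_le_of_forall_pow_mem {A : Type*} [CommGroup A] [Finite A]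
    (hA : ElementaryRankLE p e A) {N : Subgroup A} (hN : ∀ x, x ^ p ∈ N) : N.index ≤ p ^ e := by
  have hrange : (powMonoidHom p : A →* A).range ≤ N := by
    rintro _ ⟨x, rfl⟩
    exact hN x
  refine le_trans ?_ hA.card_ker_powMonoidHom_le
  rw [← Subgroup.index_range]
  exact Nat.le_of_dvd (Nat.pos_of_ne_zero Subgroup.index_ne_zero_of_finite)
    (Subgroup.index_dvd_of_le hrange)

section IsPGroup

variable {M : Type*} [Group M] [Finite M] [Fact p.Prime]

open scoped IsMulCommutative AddSubgroup in
theorem ElementaryRankLE.index_le_of_subgroup_range_conjUnits (hp : IsPGroup p M) {A : Subgroup M}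
    [A.Normal] [IsMulCommutative A] (hA : ElementaryRankLE p e A)
    {N : Subgroup (conjUnits A).range} (hN : ∀ x, x ^ p ∈ N) : N.index ≤ p ^ (3 * (e * e)) := by
  have htorsion : Nat.card (Additive A)[p] ≤ p ^ e := by
    rw [← index_range_nsmulAddMonoidHom, AddSubgroup.index_range]
    exact hA.card_ker_powMonoidHom_le
  obtain ⟨n, hn⟩ := IsPGroup.iff_card.mp (hp.to_subgroup A)
  have hpn : (p : AddMonoid.End (Additive A)) ^ n = 0 := by
    rw [← Nat.cast_pow, ← hn]
    ext a
    rw [AddMonoid.End.natCast_apply]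
    exact congrArg (fun x : Additive A ↦ (x.toMul : M)) card_nsmul_eq_zero'
  have := finite_addMonoidEnd (B := Additive A)
  calc N.index ≤ Nat.card (AddMonoid.End (Additive A))[p] ^ 3 :=
        index_le_card_torsionBy_pow_three _ hpn N hN
    _ ≤ (p ^ (e * e)) ^ 3 := Nat.pow_le_pow_left (card_torsionBy_addMonoidEnd_le htorsion) 3
    _ = p ^ (3 * (e * e)) := by rw [← pow_mul, mul_comm]

open scoped IsMulCommutative in
-- The two summands of the exponent bound the contributions of `M / A` and of `A`, for `A` a
-- self-centralizing normal abelian subgroup.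
theorem ElementaryRankLE.index_le_of_isPGroup (he : ElementaryRankLE p e M) (hp : IsPGroup p M)
    {N : Subgroup M} (hN : ∀ x, x ^ p ∈ N) : N.index ≤ p ^ (3 * (e * e) + e) := by
  have := hp.isNilpotent
  obtain ⟨A, hAn, hAc, hAC⟩ := exists_normal_isMulCommutative_centralizer_le M
  have hker : (conjUnits A).rangeRestrict.ker = A := by
    rw [MonoidHom.ker_rangeRestrict, ker_conjUnits]
    exact le_antisymm hAC (Subgroup.le_centralizer A)
  have hquot : (N ⊔ A).index ≤ p ^ (3 * (e * e)) := by
    have hmap := (he.subgroup A).index_le_of_subgroup_range_conjUnits hp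
      (N := N.map (conjUnits A).rangeRestrict) ?_
    · rwa [Subgroup.index_map, hker,
        MonoidHom.range_eq_top.mpr (conjUnits A).rangeRestrict_surjective, Subgroup.index_top,
        mul_one] at hmap
    · rintro ⟨_, x, rfl⟩
      exact ⟨x ^ p, hN x, map_pow _ x p⟩
  have hsub : N.relIndex A ≤ p ^ e :=
    (he.subgroup A).index_le_of_forall_pow_mem (N := N.subgroupOf A) fun x ↦ hN x
  calc N.index = N.relIndex A * (N ⊔ A).index := index_eq_relIndex_mul_index_sup A N
    _ ≤ p ^ e * p ^ (3 * (e * e)) := Nat.mul_le_mul hsub hquot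
    _ = p ^ (3 * (e * e) + e) := by rw [← pow_add, add_comm]

end IsPGroup

end PowSubgroup

/-! ### Weights of normal subgroups -/

section Weights

open Module End

variable {F V H : Type*} [Field F] [AddCommGroup V] [Module F V] [Group H]
  (ρ : Representation F H V)

theorem commute_of_commutator_le_ker {A : Subgroup H} (hA : ⁅A, A⁆ ≤ ρ.ker) (a b : A) :
    Commute (ρ a) (ρ b) := by
  have hab : ρ ⁅(a : H), (b : H)⁆ = 1 := hA (Subgroup.commutator_mem_commutator a.2 b.2)
  have hmul : (a * b : H) = ⁅(a : H), (b : H)⁆ * (b * a) := by rw [commutatorElement_def]; group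
  rw [commute_iff_eq, ← map_mul, hmul, map_mul, hab, one_mul, map_mul]

/-- The common eigenspace with eigenvalues `χ` of the operators by which `A` acts. -/
def weightSpace (A : Subgroup H) (χ : A → F) : Submodule F V :=
  ⨅ a : A, eigenspace (ρ a) (χ a)

variable {ρ}

theorem mem_weightSpace {A : Subgroup H} {χ : A → F} {v : V} :
    v ∈ weightSpace ρ A χ ↔ ∀ a : A, ρ a v = χ a • v := by
  simp only [weightSpace, Submodule.mem_iInf, mem_eigenspace_iff]

theorem iSupIndep_weightSpace {A : Subgroup H} (hA : ⁅A, A⁆ ≤ ρ.ker) :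
    iSupIndep (weightSpace ρ A) :=
  (independent_iInf_maxGenEigenspace_of_forall_mapsTo (fun a : A ↦ ρ a) fun a b φ ↦
    mapsTo_maxGenEigenspace_of_comm (commute_of_commutator_le_ker ρ hA b a) φ).mono
    fun χ ↦ iInf_mono fun a ↦ (genEigenspace (ρ a) (χ a)).mono le_top

theorem apply_mem_weightSpace {A : Subgroup H} [A.Normal] {χ : A → F} {v : V}
    (hv : v ∈ weightSpace ρ A χ) (x : H) :
    ρ x v ∈ weightSpace ρ A (χ ∘ MulAut.conjNormal x⁻¹) := by
  rw [mem_weightSpace] at hv ⊢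
  intro a
  have hax : (a * x : H) = x * MulAut.conjNormal x⁻¹ a := by
    rw [MulAut.conjNormal_apply]; group
  rw [← mul_apply, ← map_mul, hax, map_mul, mul_apply, hv, map_smul, Function.comp_apply]

variable (ρ) in
/-- The weights of `A`: the systems of eigenvalues that `A` has on its common eigenvectors. -/
def Weights (A : Subgroup H) : Type _ := {χ : A → F // weightSpace ρ A χ ≠ ⊥}

instance Weights.instMulAction (A : Subgroup H) [A.Normal] : MulAction H (Weights ρ A) where
  smul x χ := ⟨χ.1 ∘ MulAut.conjNormal x⁻¹, by
    obtain ⟨v, hv, hv0⟩ := (Submodule.ne_bot_iff _).mp χ.2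
    refine (Submodule.ne_bot_iff _).mpr ⟨ρ x v, apply_mem_weightSpace hv x, fun h ↦ hv0 ?_⟩
    rw [← ρ.inv_self_apply x v, h, map_zero]⟩
  one_smul χ := Subtype.ext <| by
    change χ.1 ∘ MulAut.conjNormal 1⁻¹ = χ.1
    simp
  mul_smul x y χ := Subtype.ext <| by
    change χ.1 ∘ MulAut.conjNormal (x * y)⁻¹ =
      (χ.1 ∘ MulAut.conjNormal y⁻¹) ∘ MulAut.conjNormal x⁻¹
    rw [mul_inv_rev, map_mul]
    rfl

variable [FiniteDimensional F V]

theorem finite_weights {A : Subgroup H} (hA : ⁅A, A⁆ ≤ ρ.ker) : Finite (Weights ρ A) :=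
  @Finite.of_fintype _ (iSupIndep_weightSpace hA).fintypeNeBotOfFiniteDimensional

theorem card_weights_le {A : Subgroup H} (hA : ⁅A, A⁆ ≤ ρ.ker) :
    Nat.card (Weights ρ A) ≤ finrank F V := by
  let _ : Fintype {χ // weightSpace ρ A χ ≠ ⊥} :=
    (iSupIndep_weightSpace hA).fintypeNeBotOfFiniteDimensional
  exact (Nat.card_eq_fintype_card (α := {χ // weightSpace ρ A χ ≠ ⊥})).trans_le
    (iSupIndep_weightSpace hA).subtype_ne_bot_le_finrank

-- `H` permutes the at most `r` weights of `A`, so `r!`-th powers fix each of them.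
theorem apply_pow_factorial_mem_weightSpace {A : Subgroup H} [A.Normal] (hA : ⁅A, A⁆ ≤ ρ.ker)
    {r : ℕ} (hr : finrank F V ≤ r) {χ : A → F} {v : V} (hv : v ∈ weightSpace ρ A χ) (x : H) :
    ρ (x ^ r.factorial) v ∈ weightSpace ρ A χ := by
  rcases eq_or_ne (weightSpace ρ A χ) ⊥ with hχ | hχ
  · rw [hχ, Submodule.mem_bot] at hv
    rw [hv, map_zero]
    exact zero_mem _
  have := finite_weights hA
  have hcard := (card_weights_le hA).trans hr
  have hperm : MulAction.toPermHom H (Weights ρ A) (x ^ r.factorial) = 1 := by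
    obtain ⟨t, ht⟩ := Nat.factorial_dvd_factorial hcard
    rw [ht, map_pow, pow_mul, ← Nat.card_perm, pow_card_eq_one', one_pow]
  have hfix : χ ∘ MulAut.conjNormal (x ^ r.factorial)⁻¹ = χ :=
    congrArg Subtype.val (Equiv.congr_fun hperm ⟨χ, hχ⟩)
  simpa only [hfix] using apply_mem_weightSpace hv (x ^ r.factorial)

end Weights

/-! ### Subspaces stable under powers -/

section Stable

open Module End

variable {F V H : Type*} [Field F] [AddCommGroup V] [Module F V] [Group H]
  {ρ : Representation F H V}

theorem exists_le_eigenspace_of_minimal [IsAlgClosed F] [FiniteDimensional F V]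
    {A : Subgroup H} (hA : ⁅A, A⁆ ≤ ρ.ker) {W : Submodule F V}
    (hW : Minimal (fun W ↦ W ≠ ⊥ ∧ ∀ a : A, W ∈ invtSubmodule (ρ a)) W) (a : A) :
    ∃ c, W ≤ eigenspace (ρ a) c := by
  have : Nontrivial W := Submodule.nontrivial_iff_ne_bot.mpr hW.prop.1
  obtain ⟨c, hc⟩ := exists_eigenvalue ((ρ a).restrict (hW.prop.2 a))
  obtain ⟨w, hw⟩ := hc.exists_hasEigenvector
  refine ⟨c, (hW.le_of_le ⟨?_, fun b ↦ ?_⟩ inf_le_left).trans inf_le_right⟩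
  · refine (Submodule.ne_bot_iff _).mpr ⟨w, ⟨w.2, mem_eigenspace_iff.mpr ?_⟩, fun h ↦ hw.2 ?_⟩
    · exact congrArg Subtype.val hw.apply_eq_smul
    · exact Subtype.ext h
  · exact invtSubmodule.inf_mem (hW.prop.2 b)
      (mapsTo_genEigenspace_of_comm (commute_of_commutator_le_ker ρ hA a b) c 1)

theorem nonempty_weights [IsAlgClosed F] [FiniteDimensional F V] [Nontrivial V]
    {A : Subgroup H} (hA : ⁅A, A⁆ ≤ ρ.ker) : Nonempty (Weights ρ A) := by
  obtain ⟨W, hW⟩ := exists_minimal_of_wellFoundedLT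
    (fun W : Submodule F V ↦ W ≠ ⊥ ∧ ∀ a : A, W ∈ invtSubmodule (ρ a))
    ⟨⊤, top_ne_bot, fun _ ↦ invtSubmodule.top_mem _⟩
  choose χ hχ using exists_le_eigenspace_of_minimal hA hW
  exact ⟨χ, ne_bot_of_le_ne_bot hW.prop.1 (le_iInf hχ)⟩

theorem linHom_self_apply_eq_iff {x : H} {f g : End F V} :
    ρ.linHom ρ x f = g ↔ ρ x * f = g * ρ x := by
  simp only [Representation.linHom_apply, LinearMap.ext_iff]
  constructor <;> intro h v
  · simpa using h (ρ x v)
  · simpa using h (ρ x⁻¹ v)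

theorem linHom_self_apply_apply (x n : H) : ρ.linHom ρ x (ρ n) = ρ (x * n * x⁻¹) := by
  rw [linHom_self_apply_eq_iff, ← map_mul, ← map_mul, inv_mul_cancel_right]

variable (ρ) in
/-- The elements acting by scalars, encoded as those acting trivially on `End V` by conjugation. -/
def scalarSubgroup : Subgroup H := (ρ.linHom ρ).ker

theorem mem_scalarSubgroup {h : H} : h ∈ scalarSubgroup ρ ↔ ∃ c : F, ρ h = c • 1 := by
  have hcenter : h ∈ scalarSubgroup ρ ↔ ρ h ∈ Set.center (End F V) := by
    rw [Semigroup.mem_center_iff, scalarSubgroup, MonoidHom.mem_ker, LinearMap.ext_iff]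
    exact forall_congr' fun f ↦ linHom_self_apply_eq_iff.trans eq_comm
  rw [hcenter, mem_center_iff]
  exact exists_congr fun c ↦ ⟨fun ⟨_, hc⟩ ↦ hc, fun hc ↦ ⟨by simp, hc⟩⟩

theorem mem_invtSubmodule_pow {f : End F V} {W : Submodule F V} (hW : W ∈ invtSubmodule f)
    (n : ℕ) : W ∈ invtSubmodule (f ^ n) := by
  induction n with
  | zero => exact fun _ hv ↦ hv
  | succ _ ih => exact fun v hv ↦ ih (hW hv)

theorem pow_finrank_eq_one_of_linHom_eq_smul {x n : H} {ζ : F}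
    (h : ρ.linHom ρ x (ρ n) = ζ • ρ n) : ζ ^ finrank F V = 1 := by
  have hdet (g : H) : (ρ g).det ≠ 0 :=
    ((ρ.asGroupHom g).isUnit.map LinearMap.det).ne_zero
  have hmul := congrArg LinearMap.det (linHom_self_apply_eq_iff.mp h)
  rw [map_mul, map_mul, LinearMap.det_smul, mul_comm] at hmul
  exact (mul_eq_right₀ (hdet n)).mp (mul_right_cancel₀ (hdet x) hmul).symm

theorem eigenspace_mem_invtSubmodule_of_linHom_eq {y n : H} (h : ρ.linHom ρ y (ρ n) = ρ n) (μ : F) :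
    eigenspace (ρ n) μ ∈ invtSubmodule (ρ y) :=
  mapsTo_genEigenspace_of_comm (linHom_self_apply_eq_iff.mp h).symm μ 1

theorem exists_stable_of_commutator_le_ker
    [IsAlgClosed F] [FiniteDimensional F V] [Nontrivial V]
    {A : Subgroup H} [A.Normal] (hA : ⁅A, A⁆ ≤ ρ.ker)
    (hAZ : ¬ A ≤ scalarSubgroup ρ) {r : ℕ} (hr : finrank F V ≤ r) :
    ∃ W : Submodule F V, W ≠ ⊥ ∧ W ≠ ⊤ ∧ ∀ x, W ∈ invtSubmodule (ρ (x ^ r.factorial)) := by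
  obtain ⟨χ, hχ⟩ := nonempty_weights hA
  refine ⟨weightSpace ρ A χ, hχ, fun htop ↦ hAZ fun a ha ↦ mem_scalarSubgroup.mpr ⟨χ ⟨a, ha⟩, ?_⟩,
    fun x v hv ↦ apply_pow_factorial_mem_weightSpace hA hr hv x⟩
  exact LinearMap.ext fun v ↦ mem_weightSpace.mp (htop ▸ Submodule.mem_top) ⟨a, ha⟩

theorem commute_inv_mul_of_mem_weightSpace (hρ : Function.Injective ρ) {N : Subgroup H}
    {χ : N → F} {m n : H} (hm : ρ m ∈ weightSpace (ρ.linHom ρ) N χ)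
    (hn : ρ n ∈ weightSpace (ρ.linHom ρ) N χ) (a : N) : Commute (m⁻¹ * n) a := by
  have hma := mem_weightSpace.mp hm a
  have hna := mem_weightSpace.mp hn a
  rw [linHom_self_apply_apply] at hma hna
  have hconj : a * m * (a : H)⁻¹ * (m⁻¹ * n) = a * n * (a : H)⁻¹ := hρ <| by
    rw [map_mul ρ _ (m⁻¹ * n), hma, hna, smul_mul_assoc, ← map_mul, mul_inv_cancel_left]
  calc m⁻¹ * n * a = a * m⁻¹ * (a : H)⁻¹ * (a * m * (a : H)⁻¹ * (m⁻¹ * n)) * a := by group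
    _ = a * (m⁻¹ * n) := by rw [hconj]; group

theorem exists_mem_weightSpace_linHom {N : Subgroup H} (hN : ⁅N, N⁆ ≤ scalarSubgroup ρ) {n : H}
    (hn : n ∈ N) : ∃ χ, ρ n ∈ weightSpace (ρ.linHom ρ) N χ := by
  have hscalar (a : N) : ∃ c : F, ρ ⁅(a : H), n⁆ = c • 1 :=
    mem_scalarSubgroup.mp (hN (Subgroup.commutator_mem_commutator a.2 hn))
  choose χ hχ using hscalar
  refine ⟨χ, mem_weightSpace.mpr fun a ↦ ?_⟩
  have hconj : a * n * (a : H)⁻¹ = ⁅(a : H), n⁆ * n := by rw [commutatorElement_def]; group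
  rw [linHom_self_apply_apply, hconj, map_mul, hχ, smul_mul_assoc, one_mul]

theorem exists_linHom_pow_eq_smul [FiniteDimensional F V] (hρ : Function.Injective ρ)
    (hZ : ∀ A : Subgroup H, A.Normal → IsMulCommutative A → A ≤ scalarSubgroup ρ)
    {N : Subgroup H} [N.Normal] (hN : ⁅N, N⁆ ≤ scalarSubgroup ρ) {n : H} (hn : n ∈ N) {r : ℕ}
    (hr : finrank F V ≤ r) (x : H) :
    ∃ ζ : F, ρ.linHom ρ (x ^ (r * r).factorial) (ρ n) = ζ • ρ n := by
  obtain ⟨χ, hχ⟩ := exists_mem_weightSpace_linHom hN hn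
  have hEnd : finrank F (End F V) ≤ r * r := by
    rw [finrank_linearMap]
    exact Nat.mul_le_mul hr hr
  set y := x ^ (r * r).factorial
  have hy := apply_pow_factorial_mem_weightSpace hN hEnd hχ x
  rw [linHom_self_apply_apply] at hy ⊢
  have hquot : n⁻¹ * (y * n * y⁻¹) ∈ N :=
    N.mul_mem (N.inv_mem hn) (‹N.Normal›.conj_mem n hn y)
  have hcenter : n⁻¹ * (y * n * y⁻¹) ∈ (Subgroup.center N).map N.subtype :=
    ⟨⟨_, hquot⟩, Subgroup.mem_center_iff.mpr fun a ↦
      Subtype.ext (commute_inv_mul_of_mem_weightSpace hρ hχ hy a).eq.symm, rfl⟩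
  obtain ⟨ζ, hζ⟩ := mem_scalarSubgroup.mp (hZ _ inferInstance inferInstance hcenter)
  refine ⟨ζ, ?_⟩
  rw [← mul_inv_cancel_left n (y * n * y⁻¹), map_mul, hζ, mul_smul_comm, mul_one]

theorem exists_stable_of_commutator_le_scalarSubgroup
    [IsAlgClosed F] [FiniteDimensional F V] [Nontrivial V]
    (hρ : Function.Injective ρ)
    (hZ : ∀ A : Subgroup H, A.Normal → IsMulCommutative A → A ≤ scalarSubgroup ρ)
    {N : Subgroup H} [N.Normal] (hN : ⁅N, N⁆ ≤ scalarSubgroup ρ) (hNZ : ¬ N ≤ scalarSubgroup ρ)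
    {r : ℕ} (hr : finrank F V ≤ r) :
    ∃ W : Submodule F V, W ≠ ⊥ ∧ W ≠ ⊤ ∧
      ∀ x, W ∈ invtSubmodule (ρ (x ^ ((r * r).factorial * r.factorial))) := by
  obtain ⟨n, hnN, hnZ⟩ := SetLike.not_le_iff_exists.mp hNZ
  obtain ⟨μ, hμ⟩ := exists_eigenvalue (ρ n)
  refine ⟨eigenspace (ρ n) μ, hμ, fun htop ↦ hnZ <| mem_scalarSubgroup.mpr ⟨μ, ?_⟩, fun x ↦ ?_⟩
  · exact LinearMap.ext fun v ↦ mem_eigenspace_iff.mp (htop ▸ Submodule.mem_top)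
  obtain ⟨ζ, hζ⟩ := exists_linHom_pow_eq_smul hρ hZ hN hnN hr x
  have hζr : ζ ^ r.factorial = 1 := by
    obtain ⟨t, ht⟩ := Nat.dvd_factorial finrank_pos hr
    rw [ht, pow_mul, pow_finrank_eq_one_of_linHom_eq_smul hζ, one_pow]
  have hρn : ρ n ≠ 0 := (ρ.asGroupHom n).ne_zero
  have hpow := HasEigenvector.pow_apply ⟨mem_eigenspace_iff.mpr hζ, hρn⟩ r.factorial
  rw [hζr, one_smul, ← map_pow, ← pow_mul] at hpow
  exact eigenspace_mem_invtSubmodule_of_linHom_eq hpow μ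

theorem exists_ne_bot_ne_top (h2 : 2 ≤ finrank F V) : ∃ W : Submodule F V, W ≠ ⊥ ∧ W ≠ ⊤ := by
  have : Nontrivial V := nontrivial_of_finrank_pos (R := F) (by lia)
  obtain ⟨v, hv⟩ := exists_ne (0 : V)
  refine ⟨F ∙ v, by simpa using hv, fun h ↦ ?_⟩
  have hspan := finrank_span_singleton (K := F) hv
  rw [h, finrank_top] at hspan
  lia

theorem exists_derivedSeries_not_le {G : Type*} [Group G] [Group.IsSolvable G] {Z : Subgroup G}
    (hZ : ¬ ⊤ ≤ Z) : ∃ j, ¬ derivedSeries G j ≤ Z ∧ ⁅derivedSeries G j, derivedSeries G j⁆ ≤ Z := by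
  classical
  have hex : ∃ i, derivedSeries G i ≤ Z := by
    obtain ⟨i, hi⟩ := (Group.isSolvable_def (G := G)).mp inferInstance
    exact ⟨i, hi.trans_le bot_le⟩
  have hspec := Nat.find_spec hex
  rcases hfind : Nat.find hex with _ | j <;> rw [hfind] at hspec
  · exact absurd hspec hZ
  · exact ⟨j, Nat.find_min hex (by lia), hspec⟩

theorem exists_stable_of_injective [IsAlgClosed F] [FiniteDimensional F V]
    [Group.IsSolvable H] (hρ : Function.Injective ρ) {r : ℕ} (h2 : 2 ≤ finrank F V)
    (hr : finrank F V ≤ r) :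
    ∃ W : Submodule F V, W ≠ ⊥ ∧ W ≠ ⊤ ∧
      ∀ x, W ∈ invtSubmodule (ρ (x ^ ((r * r).factorial * r.factorial))) := by
  have : Nontrivial V := nontrivial_of_finrank_pos (R := F) (by lia)
  by_cases hZ : ∀ A : Subgroup H, A.Normal → IsMulCommutative A → A ≤ scalarSubgroup ρ
  · obtain htop | htop := em ((⊤ : Subgroup H) ≤ scalarSubgroup ρ)
    · obtain ⟨W, hW0, hW1⟩ := exists_ne_bot_ne_top h2
      refine ⟨W, hW0, hW1, fun x w hw ↦ ?_⟩
      obtain ⟨c, hc⟩ := mem_scalarSubgroup.mp (htop (Subgroup.mem_top (x ^ _)))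
      rw [Submodule.mem_comap, hc]
      exact W.smul_mem c hw
    · obtain ⟨j, hj, hj'⟩ := exists_derivedSeries_not_le htop
      exact exists_stable_of_commutator_le_scalarSubgroup hρ hZ hj' hj hr
  · push Not at hZ
    obtain ⟨A, hAn, hA, hAZ⟩ := hZ
    have hcomm : ⁅A, A⁆ ≤ ρ.ker := by
      rw [Subgroup.commutator_eq_bot_iff_le_centralizer.mpr
        (Subgroup.le_centralizer_iff_isMulCommutative.mpr hA)]
      exact bot_le
    obtain ⟨W, hW0, hW1, hW⟩ := exists_stable_of_commutator_le_ker hcomm hAZ hr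
    refine ⟨W, hW0, hW1, fun x ↦ ?_⟩
    rw [mul_comm, pow_mul, map_pow]
    exact mem_invtSubmodule_pow (hW x) _

theorem exists_stable [IsAlgClosed F] [FiniteDimensional F V] [Group.IsSolvable H]
    (ρ : Representation F H V) {r : ℕ} (h2 : 2 ≤ finrank F V) (hr : finrank F V ≤ r) :
    ∃ W : Submodule F V, W ≠ ⊥ ∧ W ≠ ⊤ ∧
      ∀ x, W ∈ invtSubmodule (ρ (x ^ ((r * r).factorial * r.factorial))) := by
  let ρ' : Representation F (H ⧸ ρ.ker) V := QuotientGroup.lift ρ.ker ρ fun _ hx ↦ hx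
  have hρ' : Function.Injective ρ' := (injective_iff_map_eq_one ρ').mpr fun x ↦
    Quotient.inductionOn' x fun g hg ↦ (QuotientGroup.eq_one_iff g).mpr hg
  obtain ⟨W, hW0, hW1, hW⟩ := exists_stable_of_injective hρ' h2 hr
  exact ⟨W, hW0, hW1, fun x ↦ hW x⟩

end Stable

/-! ### Unipotent commutators of powers in solvable linear groups -/

section PowSubgroup

/-- The subgroup generated by all `m`-th powers. -/
def powSubgroup (H : Type*) [Group H] (m : ℕ) : Subgroup H :=
  Subgroup.closure (Set.range fun x : H ↦ x ^ m)

variable {H : Type*} [Group H]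

theorem pow_mem_powSubgroup (m : ℕ) (x : H) : x ^ m ∈ powSubgroup H m :=
  Subgroup.subset_closure ⟨x, rfl⟩

theorem powSubgroup_mul_le (m n : ℕ) :
    powSubgroup H (m * n) ≤ (powSubgroup (powSubgroup H m) n).map (powSubgroup H m).subtype := by
  refine (Subgroup.closure_le _).mpr ?_
  rintro _ ⟨x, rfl⟩
  exact ⟨⟨x ^ m, pow_mem_powSubgroup m x⟩ ^ n, pow_mem_powSubgroup n _, (pow_mul x m n).symm⟩

end PowSubgroup

section Unipotent

open Module End

variable {F V H : Type*} [Field F] [AddCommGroup V] [Module F V] [Group H]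

theorem isNilpotent_of_restrict_of_mapQ {f : End F V} {W : Submodule F V} (hW : W ≤ W.comap f)
    (hfW : IsNilpotent (f.restrict hW)) (hfQ : IsNilpotent (W.mapQ W f hW)) : IsNilpotent f := by
  obtain ⟨a, ha⟩ := hfW
  obtain ⟨b, hb⟩ := hfQ
  refine ⟨a + b, LinearMap.ext fun v ↦ ?_⟩
  have hbv : (f ^ b) v ∈ W := by
    rw [← Submodule.mapQ_pow] at hb
    exact (Submodule.Quotient.mk_eq_zero W).mp (LinearMap.congr_fun hb (W.mkQ v))
  rw [pow_restrict] at ha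
  rw [pow_add, mul_apply]
  exact congrArg Subtype.val (LinearMap.congr_fun ha ⟨_, hbv⟩)

theorem commute_of_finrank_le_one [FiniteDimensional F V] (h : finrank F V ≤ 1)
    (f g : End F V) : Commute f g := by
  obtain ⟨v, hv⟩ := finrank_le_one_iff.mp h
  obtain ⟨a, ha⟩ := hv (f v)
  obtain ⟨b, hb⟩ := hv (g v)
  refine LinearMap.ext fun w ↦ ?_
  obtain ⟨c, rfl⟩ := hv w
  simp only [mul_apply, map_smul, ← ha, ← hb, smul_comm a b]

theorem apply_eq_one_of_mem_commutator [FiniteDimensional F V] (ρ : Representation F H V)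
    (h : finrank F V ≤ 1) {A : Subgroup H} {g : H} (hg : g ∈ ⁅A, A⁆) : ρ g = 1 := by
  suffices hle : ⁅A, A⁆ ≤ ρ.ker from hle hg
  refine Subgroup.commutator_le.mpr fun a _ b _ ↦ ?_
  rw [MonoidHom.mem_ker, commutatorElement_def, mul_assoc, map_mul, map_mul,
    (commute_of_finrank_le_one h (ρ a) (ρ b)).eq, ← map_mul, ← map_mul, ← mul_inv_rev,
    mul_inv_cancel, map_one]

theorem powSubgroup_stable {ρ : Representation F H V} {W : Submodule F V} {m : ℕ}
    (hW : ∀ x, W ∈ invtSubmodule (ρ (x ^ m))) {y : H} (hy : y ∈ powSubgroup H m) :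
    W ∈ invtSubmodule (ρ y) := by
  induction hy using Subgroup.closure_induction'' with
  | one => simp
  | mem _ hx =>
    obtain ⟨x, rfl⟩ := hx
    exact hW x
  | inv_mem _ hx =>
    obtain ⟨x, rfl⟩ := hx
    exact inv_pow x m ▸ hW x⁻¹
  | mul x y _ _ hx hy =>
    rw [map_mul]
    exact fun _ hw ↦ hx (hy hw)

/-- An exponent `m` such that, in every solvable linear group of degree at most `r`, the commutators
of the subgroup generated by `m`-th powers are unipotent. -/
def unipotentExponent : ℕ → ℕ
  | 0 => 1
  | r + 1 => ((r + 1) * (r + 1)).factorial * (r + 1).factorial * unipotentExponent r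

theorem unipotentExponent_pos : ∀ r, 0 < unipotentExponent r
  | 0 => one_pos
  | r + 1 => Nat.mul_pos (Nat.mul_pos (Nat.factorial_pos _) (Nat.factorial_pos _))
      (unipotentExponent_pos r)

-- A weak form of Mal'cev's theorem.
theorem isNilpotent_sub_one_of_isAlgClosed [IsAlgClosed F] [FiniteDimensional F V]
    [Group.IsSolvable H] (ρ : Representation F H V) {r : ℕ} (hr : finrank F V ≤ r) {g : H}
    (hg : g ∈ ⁅powSubgroup H (unipotentExponent r), powSubgroup H (unipotentExponent r)⁆) :
    IsNilpotent (ρ g - 1) := by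
  induction r generalizing V H with
  | zero =>
    rw [apply_eq_one_of_mem_commutator ρ (by lia) hg, sub_self]
    exact IsNilpotent.zero
  | succ r ih =>
    rcases Nat.lt_or_ge 1 (finrank F V) with h2 | h1
    swap
    · rw [apply_eq_one_of_mem_commutator ρ h1 hg, sub_self]
      exact IsNilpotent.zero
    obtain ⟨W, hW0, hW1, hW⟩ := exists_stable ρ h2 hr
    set m := ((r + 1) * (r + 1)).factorial * (r + 1).factorial
    let K := powSubgroup H m
    let ρK : Representation F K V := ρ.comp K.subtype
    have hstable (y : K) : W ≤ W.comap (ρK y) := powSubgroup_stable hW y.2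
    obtain ⟨y, hy, rfl⟩ : g ∈ (⁅powSubgroup K (unipotentExponent r),
        powSubgroup K (unipotentExponent r)⁆).map K.subtype := by
      rw [Subgroup.map_commutator]
      exact Subgroup.commutator_mono (powSubgroup_mul_le _ _) (powSubgroup_mul_le _ _) hg
    have hsub : finrank F W < finrank F V := Submodule.finrank_lt hW1
    have hquot := Submodule.finrank_quotient_add_finrank W
    have hpos := Submodule.one_le_finrank_iff.mpr hW0
    have hy1 : W ≤ W.comap (ρK y - 1) := fun w hw ↦ W.sub_mem (hstable y hw) hw
    refine isNilpotent_of_restrict_of_mapQ hy1 ?_ ?_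
    · exact ih (ρK.subrepresentation W hstable) (by lia) hy
    · convert ih (ρK.quotient W hstable) (by lia) hy
      exact Submodule.linearMap_qext W rfl

theorem isNilpotent_sub_one_of_mem_commutator_powSubgroup [FiniteDimensional F V]
    [Group.IsSolvable H] (ρ : Representation F H V) {r : ℕ} (hr : finrank F V ≤ r) {g : H}
    (hg : g ∈ ⁅powSubgroup H (unipotentExponent r), powSubgroup H (unipotentExponent r)⁆) :
    IsNilpotent (ρ g - 1) := by
  let F' := AlgebraicClosure F
  let extend := baseChangeHom F F' V
  have hextend : Function.Injective extend := LinearMap.baseChangeHom_injective F V F'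
  have hnil := isNilpotent_sub_one_of_isAlgClosed ((extend : _ →* _).comp ρ)
    ((finrank_baseChange (R := F')).trans_le hr) hg
  rw [← IsNilpotent.map_iff hextend, map_sub, map_one]
  exact hnil

end Unipotent

/-! ### Chief factors -/

section PowSubgroup

variable {H K : Type*} [Group H] [Group K]

theorem map_powSubgroup {f : H →* K} (hf : Function.Surjective f) (m : ℕ) :
    (powSubgroup H m).map f = powSubgroup K m := by
  rw [powSubgroup, powSubgroup, MonoidHom.map_closure, ← Set.range_comp, ← hf.range_comp]
  exact congrArg (fun g ↦ Subgroup.closure (Set.range g)) (funext fun x ↦ map_pow f x m)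

instance powSubgroup_normal (m : ℕ) : (powSubgroup H m).Normal :=
  ⟨fun _ hn g ↦ map_powSubgroup (f := (MulAut.conj g).toMonoidHom)
    (MulAut.conj g).surjective m ▸ Subgroup.mem_map_of_mem (MulAut.conj g).toMonoidHom hn⟩

end PowSubgroup

section MinimalNormal

variable {H : Type*} [Group H]

/-- `M` is a minimal nontrivial normal subgroup. -/
def IsMinimalNormal (M : Subgroup H) : Prop :=
  Minimal (fun K : Subgroup H ↦ K.Normal ∧ K ≠ ⊥) M

theorem IsMinimalNormal.eq_of_le {M K : Subgroup H} [K.Normal] (hM : IsMinimalNormal M)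
    (hKM : K ≤ M) (hK : K ≠ ⊥) : K = M :=
  Minimal.eq_of_le hM ⟨inferInstance, hK⟩ hKM

theorem exists_isMinimalNormal_map [Finite H] {M : Subgroup H} [M.Normal] (hM : M ≠ ⊥) :
    ∃ (N : Subgroup H) (_ : N.Normal), N < M ∧ IsMinimalNormal (M.map (QuotientGroup.mk' N)) := by
  obtain ⟨N, ⟨hN, hNM⟩, hmax⟩ := (Set.toFinite {K : Subgroup H | K.Normal ∧ K < M}).exists_maximal
    ⟨⊥, inferInstance, bot_lt_iff_ne_bot.mpr hM⟩
  let π := QuotientGroup.mk' N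
  have hπ : Function.Surjective π := QuotientGroup.mk'_surjective N
  have hker : π.ker = N := QuotientGroup.ker_mk' N
  have hcomap : (M.map π).comap π = M := by
    rw [Subgroup.comap_map_eq, hker, sup_eq_left.mpr hNM.le]
  refine ⟨N, hN, hNM, ⟨Subgroup.Normal.map inferInstance π hπ, ?_⟩, fun K ⟨hK, hK0⟩ hKM ↦ ?_⟩
  · rw [Ne, Subgroup.map_eq_bot_iff, hker]
    exact hNM.not_ge
  · have hle : K.comap π ≤ M := (Subgroup.comap_mono hKM).trans_eq hcomap
    by_contra hMK
    have hlt : K.comap π < M := lt_of_le_not_ge hle fun h ↦ hMK (Subgroup.map_le_iff_le_comap.mpr h)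
    have hKN : K.comap π ≤ N :=
      hmax ⟨hK.comap π, hlt⟩ (hker.symm.trans_le (Subgroup.ker_le_comap _ _))
    refine hK0 ?_
    rwa [← Subgroup.map_comap_eq_self_of_surjective hπ K, Subgroup.map_eq_bot_iff, hker]

theorem IsMinimalNormal.isMulCommutative [Group.IsSolvable H] {M : Subgroup H}
    (hM : IsMinimalNormal M) : IsMulCommutative M := by
  have := hM.1.1
  rw [← Subgroup.le_centralizer_iff_isMulCommutative,
    ← Subgroup.commutator_eq_bot_iff_le_centralizer]
  by_contra hne
  exact (Group.IsSolvable.commutator_lt_of_ne_bot hM.1.2).ne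
    (hM.eq_of_le (Subgroup.commutator_le_left M M) hne)

open scoped IsMulCommutative in
theorem IsMinimalNormal.exists_isElementaryAbelian [Finite H] [Group.IsSolvable H]
    {M : Subgroup H} (hM : IsMinimalNormal M) :
    ∃ q, q.Prime ∧ IsElementaryAbelian q M := by
  have := hM.1.1
  have := hM.isMulCommutative
  obtain ⟨q, hq, hdvd⟩ := Nat.exists_prime_and_dvd (mt Subgroup.card_eq_one.mp hM.1.2)
  have : Fact q.Prime := ⟨hq⟩
  obtain ⟨x, hx⟩ := exists_prime_orderOf_dvd_card' (G := M) q hdvd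
  let T : Subgroup M := (powMonoidHom q : M →* M).ker
  have hT : T.Characteristic := Subgroup.characteristic_iff_le_comap.mpr fun φ y hy ↦ by
    change φ y ^ q = 1
    rw [← map_pow, show y ^ q = 1 from hy, map_one]
  have hT0 : T.map M.subtype ≠ ⊥ := fun hbot ↦ by
    rw [Subgroup.map_eq_bot_iff_of_injective _ M.subtype_injective, Subgroup.eq_bot_iff_forall]
      at hbot
    rw [hbot x (hx ▸ pow_orderOf_eq_one x : x ^ q = 1), orderOf_one] at hx
    exact hq.one_lt.ne hx
  have hTM := hM.eq_of_le (Subgroup.map_subtype_le T) hT0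
  refine ⟨q, hq, fun a ha b hb ↦ congrArg Subtype.val (mul_comm (⟨a, ha⟩ : M) ⟨b, hb⟩), ?_⟩
  intro y hy
  obtain ⟨z, hz, rfl⟩ := hTM.ge hy
  exact congrArg Subtype.val (show z ^ q = 1 from hz)

end MinimalNormal

section Index

variable {p e : ℕ} [Fact p.Prime] {X T : Type*} [Group X] [Finite X] [Group T]

theorem ElementaryRankLE.index_le_of_surjective (hX : ElementaryRankLE p e X) {f : X →* T}
    (hf : Function.Surjective f) (hT : IsPGroup p T) {N : Subgroup T} (hN : ∀ t, t ^ p ∈ N) :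
    N.index ≤ p ^ (3 * (e * e) + e) := by
  obtain ⟨P⟩ : Nonempty (Sylow p X) := inferInstance
  have htop : (P : Subgroup X).map f = ⊤ :=
    ((P.mapSurjective hf).3 (hT.of_injective _ (⊤ : Subgroup T).subtype_injective) le_top).symm
  have hPf : Function.Surjective (f.comp (P : Subgroup X).subtype) := by
    rw [← MonoidHom.range_eq_top, MonoidHom.range_comp, Subgroup.range_subtype, htop]
  rw [← N.index_comap_of_surjective hPf]
  refine (hX.subgroup P).index_le_of_isPGroup P.2 fun x ↦ ?_
  rw [Subgroup.mem_comap, map_pow]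
  exact hN _

theorem ElementaryRankLE.card_map_le (hX : ElementaryRankLE p e X) {f : X →* T} {M : Subgroup X}
    (hM : IsElementaryAbelian p (M.map f)) : Nat.card (M.map f) ≤ p ^ (3 * (e * e) + e) := by
  rw [← Subgroup.index_bot]
  exact (hX.subgroup M).index_le_of_surjective (f.subgroupMap_surjective M) hM.isPGroup
    fun x ↦ Subtype.ext (hM.pow_eq_one x x.2)

end Index

section Unipotent

variable {q : ℕ}

open scoped IsMulCommutative in
/-- The conjugation representation on a normal abelian subgroup of exponent `q`. -/
def conjRepresentation {H : Type*} [Group H] (M : Subgroup H) [M.Normal] [IsMulCommutative M]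
    [Module (ZMod q) (Additive M)] : Representation (ZMod q) H (Additive M) where
  toFun g := AddMonoidHom.toZModLinearMap q (conjUnits M g).val
  map_one' := by rw [map_one]; rfl
  map_mul' g h := by rw [map_mul]; rfl

variable [Fact q.Prime]

theorem exists_pow_eq_one_of_isNilpotent_sub_one {R : Type*} [Ring R] [CharP R q] {u : R}
    (h : IsNilpotent (u - 1)) : ∃ k : ℕ, u ^ q ^ k = 1 := by
  obtain ⟨n, hn⟩ := h
  refine ⟨n, sub_eq_zero.mp ?_⟩
  rw [← one_pow (q ^ n), ← sub_pow_char_pow_of_commute (p := q) n (Commute.one_right u)]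
  exact pow_eq_zero_of_le (Nat.lt_pow_self (Nat.Prime.one_lt Fact.out)).le hn

theorem exists_ne_zero_forall_apply_eq {V H : Type*} [AddCommGroup V] [Finite V]
    [Nontrivial V] [Module (ZMod q) V] [Group H] {ρ : Representation (ZMod q) H V} {D : Subgroup H}
    (hD : ∀ g ∈ D, IsNilpotent (ρ g - 1)) : ∃ v : V, v ≠ 0 ∧ ∀ g ∈ D, ρ g v = v := by
  have : CharP (Module.End (ZMod q) V) q := charP_of_injective_algebraMap
    (FaithfulSMul.algebraMap_injective (ZMod q) (Module.End (ZMod q) V)) q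
  have hP : IsPGroup q (D.map ρ.toHomUnits) := by
    rintro ⟨_, g, hg, rfl⟩
    obtain ⟨k, hk⟩ := exists_pow_eq_one_of_isNilpotent_sub_one (q := q) (hD g hg)
    exact ⟨k, Subtype.ext (Units.ext hk)⟩
  have hdvd : q ∣ Nat.card V := by
    rw [Module.natCard_eq_pow_finrank (K := ZMod q) (V := V), Nat.card_zmod]
    exact dvd_pow_self q (Module.finrank_pos (R := ZMod q) (M := V)).ne'
  obtain ⟨v, hv, hv0⟩ := hP.exists_fixed_point_of_prime_dvd_card_of_fixed_point V hdvd (a := 0)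
    fun u ↦ smul_zero u
  exact ⟨v, hv0.symm, fun g hg ↦ hv ⟨ρ.toHomUnits g, g, hg, rfl⟩⟩

variable {H : Type*} [Group H] {M : Subgroup H}

open scoped IsMulCommutative in
theorem IsMinimalNormal.commutator_eq_bot_of_isNilpotent [Finite H] [M.Normal] [IsMulCommutative M]
    [Module (ZMod q) (Additive M)] (hM : IsMinimalNormal M) {D : Subgroup H} [D.Normal]
    (hD : ∀ g ∈ D, IsNilpotent (conjRepresentation (q := q) M g - 1)) : ⁅M, D⁆ = ⊥ := by
  have : Nontrivial M := (Subgroup.nontrivial_iff_ne_bot M).mpr hM.1.2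
  obtain ⟨v, hv0, hv⟩ := exists_ne_zero_forall_apply_eq hD
  rw [Subgroup.commutator_eq_bot_iff_le_centralizer, ← inf_eq_left]
  refine hM.eq_of_le inf_le_left fun hbot ↦ hv0 (Subtype.ext (Subgroup.mem_bot.mp (hbot.le ?_)))
  refine ⟨v.toMul.2, Subgroup.mem_centralizer_iff.mpr fun g hg ↦ ?_⟩
  exact mul_inv_eq_iff_eq_mul.mp (congrArg (fun x : Additive M ↦ (x.toMul : H)) (hv g hg))

open scoped IsMulCommutative in
theorem IsMinimalNormal.commutator_powSubgroup_eq_bot_of_module [Finite H] [Group.IsSolvable H]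
    [M.Normal] [IsMulCommutative M] [Module (ZMod q) (Additive M)] (hM : IsMinimalNormal M)
    {r : ℕ} (hr : Nat.card M ≤ q ^ r) :
    ⁅M, ⁅powSubgroup H (unipotentExponent r), powSubgroup H (unipotentExponent r)⁆⁆ = ⊥ := by
  refine hM.commutator_eq_bot_of_isNilpotent (q := q) fun g hg ↦
    isNilpotent_sub_one_of_mem_commutator_powSubgroup _ ?_ hg
  have hcard : Nat.card (Additive M) ≤ q ^ r := hr
  rw [Module.natCard_eq_pow_finrank (K := ZMod q), Nat.card_zmod] at hcard
  exact (Nat.pow_le_pow_iff_right (Nat.Prime.one_lt Fact.out)).mp hcard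

open scoped IsMulCommutative in
theorem IsMinimalNormal.commutator_powSubgroup_eq_bot [Finite H] [Group.IsSolvable H]
    (hM : IsMinimalNormal M) (hq : IsElementaryAbelian q M) {r : ℕ} (hr : Nat.card M ≤ q ^ r) :
    ⁅M, ⁅powSubgroup H (unipotentExponent r), powSubgroup H (unipotentExponent r)⁆⁆ = ⊥ := by
  have := hM.1.1
  have := hM.isMulCommutative
  have hsmul : ∀ x : Additive M, q • x = 0 := fun x ↦ Subtype.ext (hq.pow_eq_one _ x.toMul.2)
  exact @commutator_powSubgroup_eq_bot_of_module q _ H _ M _ _ _ _ (AddCommGroup.zmodModule hsmul)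
    hM r hr

end Unipotent

section Nilpotent

variable {H : Type*} [Group H] [Finite H]

theorem isNilpotent_of_forall_commutator_lt {D : Subgroup H} [D.Normal]
    (hD : ∀ M : Subgroup H, M.Normal → M ≠ ⊥ → ⁅M, D⁆ < M) : Group.IsNilpotent D := by
  obtain ⟨n, hn⟩ := WellFoundedLT.antitone_chain_condition D.lowerCentralSeries_antitone
  refine Subgroup.isNilpotent_of_lowerCentralSeries_eq_bot (n := n) (by_contra fun hne ↦ ?_)
  exact (hD _ inferInstance hne).ne (hn (n + 1) n.le_succ).symm

/-- An exponent `m` such that, in every finite solvable group whose elementary abelian subgroups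
have rank at most `e`, the commutators of the subgroup generated by `m`-th powers generate a
nilpotent subgroup. -/
def nilpotentExponent (e : ℕ) : ℕ :=
  unipotentExponent (3 * (e * e) + e)

theorem isNilpotent_commutator_powSubgroup [Group.IsSolvable H] {e : ℕ}
    (hH : ∀ q, q.Prime → ElementaryRankLE q e H) :
    Group.IsNilpotent
      ↥⁅powSubgroup H (nilpotentExponent e), powSubgroup H (nilpotentExponent e)⁆ := by
  refine isNilpotent_of_forall_commutator_lt fun M _ hM0 ↦ ?_
  obtain ⟨N, _, hNM, hmin⟩ := exists_isMinimalNormal_map hM0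
  obtain ⟨q, hq, hel⟩ := hmin.exists_isElementaryAbelian
  have : Fact q.Prime := ⟨hq⟩
  refine lt_of_le_of_lt ?_ hNM
  rw [← QuotientGroup.ker_mk' N, ← Subgroup.map_eq_bot_iff, Subgroup.map_commutator,
    Subgroup.map_commutator, map_powSubgroup (QuotientGroup.mk'_surjective N)]
  exact hmin.commutator_powSubgroup_eq_bot hel ((hH q hq).card_map_le hel)

end Nilpotent

/-! ### Groups of bounded exponent -/

section Exponent

open scoped AddSubgroup in
theorem card_torsionBy_pow_le {B : Type*} [AddCommGroup B] [Finite B] (p j : ℕ) :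
    Nat.card B[(p ^ j : ℕ)] ≤ Nat.card B[p] ^ j := by
  induction j with
  | zero => simp
  | succ j ih =>
    rw [pow_succ, pow_succ]
    exact (card_torsionBy_mul_le _ _).trans ((Nat.mul_le_mul_left _ ih).trans_eq (mul_comm _ _))

theorem card_le_card_mul_factorial {T : Type*} [Group T] [Finite T] {A : Subgroup T} [A.Normal]
    (hA : Subgroup.centralizer (A : Set T) ≤ A) :
    Nat.card T ≤ Nat.card A * (Nat.card A).factorial := by
  let f : T →* MulAut A := MulAut.conjNormal
  have hker : f.ker ≤ A := fun g hg ↦ hA (Subgroup.mem_centralizer_iff.mpr fun x hx ↦ by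
    have hfix : f g ⟨x, hx⟩ = ⟨x, hx⟩ := DFunLike.congr_fun (MonoidHom.mem_ker.mp hg) _
    exact (mul_inv_eq_iff_eq_mul.mp (congrArg Subtype.val hfix)).symm)
  calc Nat.card T = Nat.card f.ker * Nat.card f.range := by
        rw [← f.ker.card_mul_index, Subgroup.index_ker]
    _ ≤ Nat.card A * Nat.card (Equiv.Perm A) := by
        refine Nat.mul_le_mul (Subgroup.card_le_of_le hker) ?_
        exact Nat.card_le_card_of_injective (fun u : f.range ↦ (u.1 : A ≃* A).toEquiv)
          fun _ _ h ↦ Subtype.ext (MulEquiv.toEquiv_injective h)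
    _ = Nat.card A * (Nat.card A).factorial := by rw [Nat.card_perm]

variable {X T : Type*} [Group X] [Finite X] [Group T] {p e m : ℕ}

theorem pow_pow_factorization_eq_one [Fact p.Prime] (hT : IsPGroup p T) (hm : m ≠ 0) {t : T}
    (ht : t ^ m = 1) : t ^ p ^ m.factorization p = 1 := by
  obtain ⟨i, hi⟩ := IsPGroup.iff_orderOf.mp hT t
  rw [← orderOf_dvd_iff_pow_eq_one] at ht ⊢
  rw [hi] at ht ⊢
  exact pow_dvd_pow p (((Fact.out : p.Prime).pow_dvd_iff_le_factorization hm).mp ht)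

open scoped IsMulCommutative AddSubgroup in
theorem ElementaryRankLE.card_le_of_isMulCommutative [Fact p.Prime] [IsMulCommutative T]
    (hX : ElementaryRankLE p e X) {f : X →* T} (hf : Function.Surjective f) (hT : IsPGroup p T)
    (hm : m ≠ 0) (hexp : ∀ t : T, t ^ m = 1) : Nat.card T ≤ m ^ (3 * (e * e) + e) := by
  have := Finite.of_surjective f hf
  let j := m.factorization p
  have htorsion : Nat.card (Additive T)[p] ≤ p ^ (3 * (e * e) + e) := by
    rw [← index_range_nsmulAddMonoidHom]
    exact hX.index_le_of_surjective hf hT (N := (powMonoidHom p : T →* T).range) fun t ↦ ⟨t, rfl⟩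
  have htop : (Additive T)[(p ^ j : ℕ)] = ⊤ := (AddSubgroup.eq_top_iff' _).mpr fun x ↦
    AddSubgroup.torsionBy.nsmul_iff.mpr (pow_pow_factorization_eq_one hT hm (hexp x.toMul))
  calc Nat.card T = Nat.card (Additive T)[(p ^ j : ℕ)] := by
        rw [htop, AddSubgroup.card_top]; rfl
    _ ≤ (p ^ (3 * (e * e) + e)) ^ j :=
        (card_torsionBy_pow_le p j).trans (Nat.pow_le_pow_left htorsion j)
    _ = (p ^ j) ^ (3 * (e * e) + e) := pow_right_comm _ _ _
    _ ≤ m ^ (3 * (e * e) + e) := Nat.pow_le_pow_left (Nat.ordProj_le p hm) _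

/-- A bound on the orders of the `p`-groups of exponent dividing `m` which are quotients of groups
whose elementary abelian `p`-subgroups have rank at most `e`. -/
def pGroupCardBound (e m : ℕ) : ℕ :=
  m ^ (3 * (e * e) + e) * (m ^ (3 * (e * e) + e)).factorial

theorem pGroupCardBound_pos (hm : m ≠ 0) : 0 < pGroupCardBound e m :=
  Nat.mul_pos (Nat.pow_pos (Nat.pos_of_ne_zero hm)) (Nat.factorial_pos _)

theorem ElementaryRankLE.card_le_of_isPGroup [Fact p.Prime] (hX : ElementaryRankLE p e X)
    {f : X →* T} (hf : Function.Surjective f) (hT : IsPGroup p T) (hm : m ≠ 0)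
    (hexp : ∀ t : T, t ^ m = 1) : Nat.card T ≤ pGroupCardBound e m := by
  have := Finite.of_surjective f hf
  have := hT.isNilpotent
  obtain ⟨A, hAn, hAc, hAC⟩ := exists_normal_isMulCommutative_centralizer_le T
  have hA : Nat.card A ≤ m ^ (3 * (e * e) + e) :=
    (hX.subgroup (A.comap f)).card_le_of_isMulCommutative
      (f.subgroupComap_surjective_of_surjective A hf) (hT.to_subgroup A) hm
      fun t ↦ Subtype.ext (hexp t)
  exact (card_le_card_mul_factorial hAC).trans (Nat.mul_le_mul hA (Nat.factorial_le hA))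

theorem card_primeFactors_card_le [Finite T] (hm : m ≠ 0) (hexp : ∀ t : T, t ^ m = 1) :
    (Nat.card T).primeFactors.card ≤ m := by
  have hsub : (Nat.card T).primeFactors ⊆ Finset.Icc 1 m := fun p hp ↦ by
    have : Fact p.Prime := ⟨Nat.prime_of_mem_primeFactors hp⟩
    obtain ⟨x, hx⟩ := exists_prime_orderOf_dvd_card' p (Nat.dvd_of_mem_primeFactors hp)
    have hpm : p ∣ m := hx ▸ orderOf_dvd_of_pow_eq_one (hexp x)
    exact Finset.mem_Icc.mpr
      ⟨Nat.Prime.one_le Fact.out, Nat.le_of_dvd (Nat.pos_of_ne_zero hm) hpm⟩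
  simpa using Finset.card_le_card hsub

theorem card_le_of_forall_pow_eq_one (hX : ∀ p, p.Prime → ElementaryRankLE p e X) {f : X →* T}
    (hf : Function.Surjective f) (hm : m ≠ 0) (hexp : ∀ t : T, t ^ m = 1) :
    Nat.card T ≤ pGroupCardBound e m ^ m := by
  have := Finite.of_surjective f hf
  calc Nat.card T = ∏ p ∈ (Nat.card T).primeFactors, p ^ (Nat.card T).factorization p :=
        (Nat.prod_factorization_pow_eq_self Nat.card_pos.ne').symm
    _ ≤ ∏ _p ∈ (Nat.card T).primeFactors, pGroupCardBound e m := by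
        refine Finset.prod_le_prod' fun p hp ↦ ?_
        have : Fact p.Prime := ⟨Nat.prime_of_mem_primeFactors hp⟩
        obtain ⟨P⟩ : Nonempty (Sylow p T) := inferInstance
        rw [← P.card_eq_multiplicity]
        exact ((hX p Fact.out).subgroup (P.comap f)).card_le_of_isPGroup
          (f.subgroupComap_surjective_of_surjective P hf) P.2 hm fun t ↦ Subtype.ext (hexp t)
    _ = pGroupCardBound e m ^ (Nat.card T).primeFactors.card := Finset.prod_const _
    _ ≤ pGroupCardBound e m ^ m :=
        Nat.pow_le_pow_right (pGroupCardBound_pos hm) (card_primeFactors_card_le hm hexp)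

theorem index_powSubgroup_le (hX : ∀ p, p.Prime → ElementaryRankLE p e X) {f : X →* T}
    (hf : Function.Surjective f) (hm : m ≠ 0) :
    (powSubgroup T m).index ≤ pGroupCardBound e m ^ m := by
  refine card_le_of_forall_pow_eq_one hX (f := (QuotientGroup.mk' (powSubgroup T m)).comp f)
    ((QuotientGroup.mk'_surjective _).comp hf) hm fun t ↦ ?_
  obtain ⟨y, rfl⟩ := QuotientGroup.mk'_surjective _ t
  rw [← map_pow]
  exact (QuotientGroup.eq_one_iff _).mpr (pow_mem_powSubgroup m y)

end Exponent

/-! ### The quotients by `F_2(G)` and `F_3(G)` -/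

section Fitting

variable {G : Type*} [Group G]

theorem exists_surjective_quotient_fitting2 :
    ∃ f : G ⧸ fittingSubgroup G →* G ⧸ fitting2 G, Function.Surjective f := by
  refine ⟨QuotientGroup.map _ _ (MonoidHom.id G) ?_, ?_⟩
  · rw [Subgroup.comap_id, fitting2]
    exact (QuotientGroup.ker_mk' _).symm.trans_le (Subgroup.ker_le_comap _ _)
  · exact QuotientGroup.map_surjective_of_surjective _ _ _ QuotientGroup.mk_surjective _

theorem commutator_powSubgroup_quotient_fitting2_eq_bot {m : ℕ}
    (h : Group.IsNilpotent ↥⁅powSubgroup (G ⧸ fittingSubgroup G) m,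
      powSubgroup (G ⧸ fittingSubgroup G) m⁆) :
    ⁅powSubgroup (G ⧸ fitting2 G) m, powSubgroup (G ⧸ fitting2 G) m⁆ = ⊥ := by
  rw [← map_powSubgroup (QuotientGroup.mk'_surjective (fitting2 G)), ← Subgroup.map_commutator,
    Subgroup.map_eq_bot_iff, QuotientGroup.ker_mk', fitting2, ← Subgroup.map_le_iff_le_comap,
    Subgroup.map_commutator, map_powSubgroup (QuotientGroup.mk'_surjective _)]
  exact le_fittingSubgroup

theorem card_quotient_fitting3_le_index [Finite G] {B : Subgroup (G ⧸ fitting2 G)} [B.Normal]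
    [Group.IsNilpotent B] : Nat.card (G ⧸ fitting3 G) ≤ B.index := by
  rw [← Subgroup.index_eq_card, fitting3,
    Subgroup.index_comap_of_surjective _ (QuotientGroup.mk'_surjective _)]
  exact Nat.le_of_dvd (Nat.pos_of_ne_zero Subgroup.index_ne_zero_of_finite)
    (Subgroup.index_dvd_of_le le_fittingSubgroup)

/-- A bound, for finite solvable groups `G` of c-dimension at most `k`, on the index of an abelian
normal subgroup of `G / F_2(G)`, and hence on the order of `G / F_3(G)`. -/
def fittingIndexBound (k : ℕ) : ℕ :=
  pGroupCardBound (2 * k) (nilpotentExponent (2 * k)) ^ nilpotentExponent (2 * k)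

theorem CDimLE.exists_normal_isMulCommutative_index_le [Finite G] [Group.IsSolvable G] {k : ℕ}
    (hG : CDimLE k G) : ∃ B : Subgroup (G ⧸ fitting2 G),
      B.Normal ∧ IsMulCommutative B ∧ B.index ≤ fittingIndexBound k := by
  have hrank : ∀ p, p.Prime → ElementaryRankLE p (2 * k) (G ⧸ fittingSubgroup G) := fun p hp ↦
    have : Fact p.Prime := ⟨hp⟩
    hG.elementaryRankLE
  have hnil := isNilpotent_commutator_powSubgroup hrank
  obtain ⟨f, hf⟩ := exists_surjective_quotient_fitting2 (G := G)
  refine ⟨powSubgroup _ _, inferInstance, Subgroup.le_centralizer_iff_isMulCommutative.mp ?_,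
    index_powSubgroup_le hrank hf (unipotentExponent_pos _).ne'⟩
  exact Subgroup.commutator_eq_bot_iff_le_centralizer.mp
    (commutator_powSubgroup_quotient_fitting2_eq_bot hnil)

end Fitting

/-- There are functions `f g : ℕ → ℕ` such that for every finite solvable
group `G` of c-dimension at most `k`, the quotient `G/F_2(G)` contains an abelian
subgroup of index at most `f k`, and the order of `G/F_3(G)` is at most `g k`. -/
theorem solvable_quotient_fitting2_abelian_bounded :
    ∃ f g : ℕ → ℕ, ∀ (k : ℕ) (G : Type) [Group G] [Fintype G], IsSolvable G →
      (∀ (m : ℕ) (S : Fin (m + 1) → Set G),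
        StrictMono (fun i => Subgroup.centralizer (S i)) → m ≤ k) →
      ((∃ A : Subgroup (G ⧸ fitting2 G),
          (∀ a ∈ A, ∀ b ∈ A, a * b = b * a) ∧ A.index ≤ f k) ∧
        Nat.card (G ⧸ fitting3 G) ≤ g k) := by
  refine ⟨fittingIndexBound, fittingIndexBound, fun k G _ _ hsolvable hchain ↦ ?_⟩
  have : Group.IsSolvable G := hsolvable
  have hG : CDimLE k G := hchain
  obtain ⟨B, _, hB, hindex⟩ := hG.exists_normal_isMulCommutative_index_le
  have hcomm : ∀ a ∈ B, ∀ b ∈ B, a * b = b * a := fun _ ha _ hb ↦ setLike_mul_comm ha hb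
  have : Group.IsNilpotent B := open scoped IsMulCommutative in inferInstance
  exact ⟨⟨B, hcomm, hindex⟩, card_quotient_fitting3_le_index.trans hindex⟩
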